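/- The abelianization of the pure round twin group Π_6 is a free abelian group of rank 15, i.e. the abelianization of π_1(Q_6, q₀) is isomorphic to ℤ^15. -/

import Mathlib

open scoped Real

/-!
The abelianisation `A` of the fundamental group is shown to have fifteen generators and a
homomorphism to `ℂ¹⁵` whose image spans. The images of the generators then form a basis, so `A` is
free on them (`equiv_of_generators`).

**Windings.** A nowhere vanishing function on the configuration space gives a homomorphism from `A`
to `ℂ`, the increment of its logarithm along a loop. There are the five coordinates, and for each of
the ten triples among the five moving points, at `A, B, C` say, the function
`(A - C)(B - 1) + i (A - 1)(B - C)`. The Cayley transform takes the fixed point `1` to infinity and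
turns this function into `(a - c) + i (b - c)`, up to factors which do not wind, so it detects the
loop around the stratum `a = b = c`. The loops around these ten strata have zero coordinate windings
and, among the triples, wind only for their own; the five loops where one point travels round the
circle have independent coordinate windings. Hence the span is everything (`span_windingHom`).

**Generators.** Let `c` be the universal additive cocycle on paths, which sends a loop to its class
in `A`. Paths of configurations lift to `ℝ⁵` along `θ ↦ exp 2πiθ`. Modulo `ℤ⁵`, the admissible
vectors are covered by `120` convex chambers, one for each cyclic order of the points, that is, for
each `σ : Perm (Fin 5)`. In a convex set `c` depends only on the ends of a path, so up to choices
made in the chambers `c` is determined by its jumps across walls. There are five walls for each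
chamber: a collision of neighbours among the moving points, or the passage of a point through `1`.
Crossing a collision wall back and forth gives zero, and a codimension-two stratum where two walls
meet gives a relation between four jumps; where the walls come from three consecutive points the
stratum is removed and there is no relation. A finite computation with these relations shows that,
after a coboundary is subtracted, all jumps lie in the subgroup generated by fifteen of them
(`exists_generators`, `exists_wallJump_generators`). Modulo this subgroup the primitives of `c` on
the chambers fit together to a global one (`comap_eq_pot_sub`), which depends only on the
configuration, so every loop becomes trivial (`exists_fifteen_generators`).
-/

noncomputable section

/-- The configuration space `Q_{n+1}` of `n+1` ordered points on the circle,
no three of which coincide, with the last point fixed at `1`. -/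
def QSet (n : ℕ) : Set (Fin (n + 1) → Circle) :=
  {z | z (Fin.last n) = 1 ∧
    ∀ i j k : Fin (n + 1), i ≠ j → i ≠ k → j ≠ k → ¬(z i = z j ∧ z i = z k)}

/-- The basepoint of `Q_{n+1}`: the `j`-th coordinate is `exp (2 π i j / (n+1))` (`1`-based). -/
def q0 (n : ℕ) : Fin (n + 1) → Circle :=
  fun j => Circle.exp (2 * π * (j.val + 1) / (n + 1))

theorem q0_injective (n : ℕ) : Function.Injective (q0 n) := by
  intro i j h
  simp only [q0] at h; rw [Circle.exp_eq_exp] at h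
  obtain ⟨m, hm⟩ := h
  have hn : (0:ℝ) < (n:ℝ) + 1 := by positivity
  have hpi : (0:ℝ) < π := Real.pi_pos
  have h2 : ((i.val : ℝ) + 1) = ((j.val : ℝ) + 1) + m * ((n:ℝ) + 1) := by
    field_simp at hm
    nlinarith [hm]
  have h3 : ((i.val : ℤ) + 1) = ((j.val : ℤ) + 1) + m * ((n:ℤ) + 1) := by
    exact_mod_cast h2
  have hi := i.isLt
  have hj := j.isLt
  have hb : m * ((n:ℤ) + 1) = (i.val : ℤ) - (j.val : ℤ) := by linarith [h3]
  have hi' : (i.val : ℤ) ≤ n := by exact_mod_cast Nat.lt_succ_iff.mp hi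
  have hj' : (j.val : ℤ) ≤ n := by exact_mod_cast Nat.lt_succ_iff.mp hj
  have hi0 : (0:ℤ) ≤ i.val := Int.natCast_nonneg _
  have hj0 : (0:ℤ) ≤ j.val := Int.natCast_nonneg _
  have hm0 : m = 0 := by
    rcases lt_trichotomy m 0 with hm' | hm' | hm'
    · have h1 : m ≤ -1 := by omega
      nlinarith
    · exact hm'
    · have h1 : 1 ≤ m := hm'
      nlinarith
  subst hm0
  simp only [zero_mul] at hb
  have : (i.val : ℤ) = j.val := by omega
  exact Fin.ext (by exact_mod_cast this)

theorem q0_mem (n : ℕ) : q0 n ∈ QSet n := by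
  constructor
  · show Circle.exp _ = 1
    have : 2 * π * ((Fin.last n).val + 1) / (n + 1) = 2 * π := by
      simp [Fin.last]
      field_simp
    rw [this, Circle.exp_two_pi]
  · intro i j k hij _ _ h
    exact hij (q0_injective n h.1)

/-- The basepoint as an element of `Q_{n+1}`. -/
def Qbase (n : ℕ) : QSet n := ⟨q0 n, q0_mem n⟩

section

open unitInterval Topology

/-! ### Additive cocycles on paths -/

/-- An additive cocycle on the paths of `X` with values in `M`: a function on paths which is
invariant under homotopy relative to the ends and additive under concatenation, that is, an
additive functor on the fundamental groupoid. Paths are bare maps `C(I, X)`, so that no endpoint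
casts are needed when a path is given as a composite. -/
structure PathCocycle (X M : Type*) [TopologicalSpace X] [AddCommGroup M] where
  toFun : C(I, X) → M
  homotopic' : ∀ {γ γ' : C(I, X)}, γ.HomotopicRel γ' {0, 1} → toFun γ = toFun γ'
  trans' : ∀ {x y z : X} (p : Path x y) (q : Path y z),
    toFun (p.trans q).toContinuousMap = toFun p.toContinuousMap + toFun q.toContinuousMap

namespace PathCocycle

variable {X M : Type*} [TopologicalSpace X] [AddCommGroup M] (c : PathCocycle X M)

theorem homotopic {x y : X} {p q : Path x y} (h : p.Homotopic q) :
    c.toFun p.toContinuousMap = c.toFun q.toContinuousMap :=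
  c.homotopic' h

theorem refl (x : X) : c.toFun (Path.refl x).toContinuousMap = 0 := by
  have := c.trans' (Path.refl x) (Path.refl x)
  rw [Path.refl_trans_refl] at this
  simpa using this

theorem symm {x y : X} (p : Path x y) :
    c.toFun p.symm.toContinuousMap = -c.toFun p.toContinuousMap := by
  have := c.homotopic ⟨Path.Homotopy.reflTransSymm p⟩
  rw [c.refl, c.trans'] at this
  exact eq_neg_of_add_eq_zero_right this.symm

theorem conj {x y : X} (p : Path x y) (q : Path y y) :
    c.toFun ((p.trans q).trans p.symm).toContinuousMap = c.toFun q.toContinuousMap := by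
  rw [c.trans', c.trans', c.symm]; abel

/-- The homomorphism from the abelianised fundamental group at `x` given by a cocycle. -/
def hom (x : X) : Additive (Abelianization (FundamentalGroup X x)) →+ M :=
  (Abelianization.lift (A := Multiplicative M) (MonoidHom.mk'
    (fun g : FundamentalGroup X x => Multiplicative.ofAdd (Quotient.lift
      (s := Path.Homotopic.setoid x x)
      (fun p : Path x x => c.toFun p.toContinuousMap) (fun _ _ h => c.homotopic h) g.toPath))
    (by
      -- multiplication in the fundamental group is concatenation in the opposite order
      intro g h
      induction g using Quotient.inductionOn with | _ p
      induction h using Quotient.inductionOn with | _ q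
      rw [mul_comm (Multiplicative.ofAdd _)]
      exact congrArg Multiplicative.ofAdd (c.trans' q p)))).toAdditiveLeft

/-- The class of a loop in the abelianised fundamental group. -/
def _root_.loopClass {x : X} (p : Path x x) : Additive (Abelianization (FundamentalGroup X x)) :=
  Additive.ofMul (Abelianization.of (FundamentalGroup.fromPath (Path.Homotopic.Quotient.mk p)))

theorem hom_loopClass {x : X} (p : Path x x) : c.hom x (loopClass p) = c.toFun p.toContinuousMap :=
  rfl

theorem _root_.loopClass_homotopic {x : X} {p q : Path x x} (h : p.Homotopic q) :
    loopClass p = loopClass q := by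
  unfold loopClass
  rw [Path.Homotopic.Quotient.eq.2 h]

theorem _root_.loopClass_trans {x : X} (p q : Path x x) :
    loopClass (p.trans q) = loopClass p + loopClass q := by
  rw [add_comm]
  exact congrArg Additive.ofMul
    (map_mul Abelianization.of (FundamentalGroup.fromPath (Path.Homotopic.Quotient.mk q))
      (FundamentalGroup.fromPath (Path.Homotopic.Quotient.mk p)))

theorem _root_.loopClass_surjective {x : X} (a : Additive (Abelianization (FundamentalGroup X x))) :
    ∃ p : Path x x, loopClass p = a := by
  obtain ⟨g, hg⟩ := QuotientGroup.mk_surjective a.toMul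
  obtain ⟨p, hp⟩ := Path.Homotopic.Quotient.mk_surjective (FundamentalGroup.toPath g)
  refine ⟨p, ?_⟩
  unfold loopClass
  rw [hp]
  exact hg

/-- A map from the interval, as a path between its ends. -/
def _root_.asPath (γ : C(I, X)) : Path (γ 0) (γ 1) := ⟨γ, rfl, rfl⟩

/-- A cocycle with a local primitive `f` along `γ` has `f` as a primitive along all of `γ`: the
difference between the two is locally constant on the interval. -/
theorem eq_sub_of_local (γ : C(I, X)) (f : I → M)
    (h : ∀ t₀, ∀ᶠ t in 𝓝 t₀, c.toFun ((asPath γ).subpath t₀ t).toContinuousMap = f t - f t₀) :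
    c.toFun γ = f 1 - f 0 := by
  let g : I → M := fun t => c.toFun ((asPath γ).subpath 0 t).toContinuousMap - f t
  have hg : IsLocallyConstant g := by
    rw [IsLocallyConstant.iff_eventually_eq]
    intro t₀
    filter_upwards [h t₀] with t ht
    have := c.homotopic ⟨Path.Homotopy.subpathTransSubpath (asPath γ) 0 t₀ t⟩
    simp only [g]
    rw [← this, c.trans', ht]
    abel
  have := hg.apply_eq_of_preconnectedSpace 0 1
  simp only [g, Path.subpath_self, Path.subpath_zero_one, c.refl] at this
  have e : ((asPath γ).cast (asPath γ).source (asPath γ).target).toContinuousMap = γ := rfl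
  rw [e] at this
  rw [zero_sub, eq_sub_iff_add_eq] at this
  rw [← this]; abel

open CategoryTheory in
/-- The middle factors `b⁻¹ b` cancel up to homotopy. -/
theorem _root_.homotopic_aux {w x y z : X} (a : Path w x) (p : Path x y) (b : Path w y)
    (q : Path y z) (d : Path w z) : Path.Homotopic ((a.trans (p.trans q)).trans d.symm)
      (((a.trans p).trans b.symm).trans ((b.trans q).trans d.symm)) := by
  rw [← Path.Homotopic.Quotient.eq]
  simp only [Path.Homotopic.Quotient.mk_trans, Path.Homotopic.Quotient.mk_symm]
  generalize Path.Homotopic.Quotient.mk a = A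
  generalize Path.Homotopic.Quotient.mk p = P
  generalize Path.Homotopic.Quotient.mk b = B
  generalize Path.Homotopic.Quotient.mk q = Q
  generalize Path.Homotopic.Quotient.mk d = D
  let A' : FundamentalGroupoid.mk w ⟶ FundamentalGroupoid.mk x := A
  let P' : FundamentalGroupoid.mk x ⟶ FundamentalGroupoid.mk y := P
  let B' : FundamentalGroupoid.mk w ⟶ FundamentalGroupoid.mk y := B
  let Q' : FundamentalGroupoid.mk y ⟶ FundamentalGroupoid.mk z := Q
  let D' : FundamentalGroupoid.mk w ⟶ FundamentalGroupoid.mk z := D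
  have : (A' ≫ (P' ≫ Q')) ≫ Groupoid.inv D' =
    ((A' ≫ P') ≫ Groupoid.inv B') ≫ ((B' ≫ Q') ≫ Groupoid.inv D') := by simp
  exact this

/-- Conjugating by the chosen connecting paths is insensitive to a cast of the endpoints. -/
theorem _root_.loopClass_cast [PathConnectedSpace X] {x₀ y z y' z' : X} (p : Path y z)
    (hy : y' = y) (hz : z' = z) :
    loopClass (((PathConnectedSpace.somePath x₀ y').trans (p.cast hy hz)).trans
      (PathConnectedSpace.somePath x₀ z').symm) =
    loopClass (((PathConnectedSpace.somePath x₀ y).trans p).trans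
      (PathConnectedSpace.somePath x₀ z).symm) := by
  subst hy hz; rfl

/-- The universal cocycle: a path is closed up to a loop at `x₀` by the paths chosen by
`PathConnectedSpace.somePath`, and sent to the class of that loop. -/
def univ [PathConnectedSpace X] (x₀ : X) :
    PathCocycle X (Additive (Abelianization (FundamentalGroup X x₀))) where
  toFun γ := loopClass (((PathConnectedSpace.somePath x₀ (γ 0)).trans (asPath γ)).trans
    (PathConnectedSpace.somePath x₀ (γ 1)).symm)
  homotopic' := by
    rintro γ γ' ⟨h⟩
    have h0 : γ 0 = γ' 0 := h.fst_eq_snd (by simp)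
    have h1 : γ 1 = γ' 1 := h.fst_eq_snd (by simp)
    have key : ∀ (y z : X) (p q : Path y z), p.Homotopic q →
        loopClass (((PathConnectedSpace.somePath x₀ y).trans p).trans
          (PathConnectedSpace.somePath x₀ z).symm) =
        loopClass (((PathConnectedSpace.somePath x₀ y).trans q).trans
          (PathConnectedSpace.somePath x₀ z).symm) := fun y z p q hpq =>
      loopClass_homotopic (((Path.Homotopic.refl _).hcomp hpq).hcomp (Path.Homotopic.refl _))
    rw [key _ _ (asPath γ) ((asPath γ').cast h0 h1) ⟨h⟩]
    exact loopClass_cast _ h0 h1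
  trans' := by
    intro x y z p q
    have key : ∀ (x y : X) (p : Path x y),
      loopClass (((PathConnectedSpace.somePath x₀ (p 0)).trans (asPath p.toContinuousMap)).trans
        (PathConnectedSpace.somePath x₀ (p 1)).symm) =
      loopClass (((PathConnectedSpace.somePath x₀ x).trans p).trans
        (PathConnectedSpace.somePath x₀ y).symm) := by
      intro x y p
      obtain ⟨γ, rfl, rfl⟩ := p
      rfl
    refine (key _ _ _).trans ?_
    refine Eq.trans ?_ (congrArg₂ (· + ·) (key _ _ p).symm (key _ _ q).symm)
    rw [← loopClass_trans]
    exact loopClass_homotopic (homotopic_aux _ _ _ _ _)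

/-- On loops at the base point the choices made in `univ` cancel. -/
theorem univ_loop [PathConnectedSpace X] (x₀ : X) (p : Path x₀ x₀) :
    (univ x₀).toFun p.toContinuousMap = loopClass p := by
  have h0 := p.source
  have h1 := p.target
  refine (loopClass_cast p h0 h1).trans ?_
  have h2 : ∀ q : Path x₀ x₀, loopClass q.symm = - loopClass q := by
    intro q
    have := loopClass_homotopic ⟨Path.Homotopy.reflTransSymm q⟩
    have h3 := loopClass_trans (Path.refl x₀) (Path.refl x₀)
    rw [Path.refl_trans_refl] at h3
    rw [loopClass_trans] at this
    rw [left_eq_add.1 h3] at this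
    exact eq_neg_of_add_eq_zero_right this.symm
  rw [loopClass_trans, loopClass_trans, h2]; abel

end PathCocycle

/-! ### Winding of non-vanishing functions -/

/-- The increment of a continuous logarithm along a path in `ℂ \ {0}` (so `2πi` times the winding
number when the path is closed). -/
def windVal (γ : C(I, {z : ℂ // z ≠ 0})) : ℂ :=
  Complex.isCoveringMap_exp.liftPath γ (Complex.log (γ 0))
    (Subtype.ext (Complex.exp_log (γ 0).2).symm) 1 - Complex.log (γ 0)

/-- Any continuous logarithm computes the increment. -/
theorem windVal_eq (γ : C(I, {z : ℂ // z ≠ 0})) (L : C(I, ℂ)) (h : ∀ t, Complex.exp (L t) = γ t) :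
    windVal γ = L 1 - L 0 := by
  set L' := Complex.isCoveringMap_exp.liftPath γ (Complex.log (γ 0))
    (Subtype.ext (Complex.exp_log (γ 0).2).symm) with hL'
  have h0 : L' 0 = Complex.log (γ 0) := Complex.isCoveringMap_exp.liftPath_zero _ _ _
  have h' : ∀ t, Complex.exp (L' t) = γ t := fun t =>
    congrArg Subtype.val (congrFun (Complex.isCoveringMap_exp.liftPath_lifts γ _
      (Subtype.ext (Complex.exp_log (γ 0).2).symm)) t)
  have := Complex.isCoveringMap_exp.const_of_comp (g := fun t => L' t - L t) (by fun_prop)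
    (fun s t => Subtype.ext (by
      simp only [Complex.exp_sub, h, h']
      rw [div_self (γ s).2, div_self (γ t).2])) 1 0
  have e : windVal γ = L' 1 - Complex.log (γ 0) := rfl
  rw [e, ← h0]
  linear_combination this

theorem exists_log (γ : C(I, {z : ℂ // z ≠ 0})) (e : ℂ) (he : Complex.exp e = γ 0) :
    ∃ L : C(I, ℂ), (∀ t, Complex.exp (L t) = γ t) ∧ L 0 = e := by
  obtain ⟨L, hL, h0⟩ := Complex.isCoveringMap_exp.exists_path_lifts γ e (Subtype.ext he.symm)
  exact ⟨L, fun t => congrArg Subtype.val (congrFun hL t), h0⟩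

/-- The cocycle of increments of a logarithm of `F`. -/
def winding {X : Type*} [TopologicalSpace X] (F : C(X, {z : ℂ // z ≠ 0})) : PathCocycle X ℂ where
  toFun γ := windVal (F.comp γ)
  homotopic' := by
    rintro γ γ' h
    have h' := h.comp_continuousMap F
    obtain ⟨k⟩ := h
    have h0 : γ 0 = γ' 0 := k.fst_eq_snd (by simp)
    simp only [windVal, ContinuousMap.comp_apply, h0]
    rw [Complex.isCoveringMap_exp.liftPath_apply_one_eq_of_homotopicRel h']
  trans' := by
    intro x y z p q
    obtain ⟨L, hL, -⟩ := exists_log (F.comp p.toContinuousMap) _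
      (Complex.exp_log (F.comp p.toContinuousMap 0).2)
    obtain ⟨L', hL₂, h0⟩ := exists_log (F.comp q.toContinuousMap) (L 1) (by
      rw [hL 1]
      change ((F (p 1) : {z : ℂ // z ≠ 0}) : ℂ) = F (q 0)
      rw [p.target, q.source])
    rw [windVal_eq _ L hL, windVal_eq _ L' hL₂]
    let P : Path (L 0) (L 1) := ⟨L, rfl, rfl⟩
    let Q : Path (L 1) (L' 1) := ⟨L', h0, rfl⟩
    rw [windVal_eq _ (P.trans Q).toContinuousMap, h0]
    · have e1 : (P.trans Q).toContinuousMap 1 = L' 1 := (P.trans Q).target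
      have e0 : (P.trans Q).toContinuousMap 0 = L 0 := (P.trans Q).source
      rw [e0, e1]; ring
    · intro t
      change Complex.exp ((P.trans Q) t) = F ((p.trans q) t)
      rw [Path.trans_apply, Path.trans_apply]
      split
      · exact hL _
      · exact hL₂ _

/-- On the unit circle `(A - C)(B - 1)` and `(A - 1)(B - C)` are real multiples of each other (their
quotient is a cross-ratio), so `(A - C)(B - 1) + i (A - 1)(B - C)` vanishes only if both do, and
this forces three of `A, B, C, 1` to coincide. -/
theorem tripleFun_ne_zero (A B C : Circle) (h1 : ¬(A = C ∧ A = 1)) (h2 : ¬(A = C ∧ B = C))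
    (h3 : ¬(B = 1 ∧ A = 1)) (h4 : ¬(B = 1 ∧ B = C)) :
    ((A : ℂ) - C) * (B - 1) + Complex.I * ((A - 1) * (B - C)) ≠ 0 := by
  intro h
  have hA : (A : ℂ) ≠ 0 := A.coe_ne_zero
  have hB : (B : ℂ) ≠ 0 := B.coe_ne_zero
  have hC : (C : ℂ) ≠ 0 := C.coe_ne_zero
  -- Conjugation divides both products by `A * B * C`, so it gives the equation with `i` replaced
  -- by `-i`.
  have hc := congrArg (starRingEnd ℂ) h
  simp only [map_add, map_mul, map_sub, map_one, map_zero, Complex.conj_I, ← Circle.coe_inv_eq_conj,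
    Circle.coe_inv] at hc
  field_simp at hc
  have hP : ((A : ℂ) - C) * (B - 1) = 0 := by linear_combination (1/2) * h + (1/2) * hc
  have hR : ((A : ℂ) - 1) * (B - C) = 0 := by
    have : Complex.I * (((A : ℂ) - 1) * (B - C)) = 0 := by linear_combination h - hP
    simpa using this
  have e1 : (A : ℂ) = 1 → A = 1 := fun h => Circle.ext (by simpa using h)
  have e2 : (B : ℂ) = 1 → B = 1 := fun h => Circle.ext (by simpa using h)
  rcases mul_eq_zero.1 hP with hP | hP <;> rcases mul_eq_zero.1 hR with hR | hR <;>
    rw [sub_eq_zero] at hP hR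
  · exact h1 ⟨Circle.ext hP, e1 hR⟩
  · exact h2 ⟨Circle.ext hP, Circle.ext hR⟩
  · exact h3 ⟨e2 hP, e1 hR⟩
  · exact h4 ⟨e2 hP, Circle.ext hR⟩

/-- Increasing triples in `Fin 5`. -/
abbrev Triple : Type := {s : Fin 5 × Fin 5 × Fin 5 // s.1 < s.2.1 ∧ s.2.1 < s.2.2}

theorem continuous_coord (j : Fin 6) : Continuous fun z : QSet 5 => (z.1 j : ℂ) :=
  continuous_subtype_val.comp ((continuous_apply j).comp continuous_subtype_val)

/-- The coordinate `z_l`, a non-vanishing function on the configuration space. -/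
def coordFun (l : Fin 5) : C(QSet 5, {z : ℂ // z ≠ 0}) where
  toFun z := ⟨z.1 l.castSucc, Circle.coe_ne_zero _⟩
  continuous_toFun := Continuous.subtype_mk (continuous_coord _) _

/-- The function `(A - C)(B - 1) + i (A - 1)(B - C)` of the coordinates `A, B, C` numbered by the
triple. It vanishes nowhere on the configuration space. -/
def tripleFun (s : Triple) : C(QSet 5, {z : ℂ // z ≠ 0}) where
  toFun z := ⟨((z.1 s.1.1.castSucc : ℂ) - z.1 s.1.2.2.castSucc) * (z.1 s.1.2.1.castSucc - 1) +
    Complex.I * ((z.1 s.1.1.castSucc - 1) * (z.1 s.1.2.1.castSucc - z.1 s.1.2.2.castSucc)), by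
      obtain ⟨z, hz1, hz⟩ := z
      obtain ⟨⟨a, b, c⟩, hab, hbc⟩ := s
      simp only at hab hbc ⊢
      have hac := hab.trans hbc
      have inj : ∀ {x y : Fin 5}, x < y → x.castSucc ≠ y.castSucc := fun h e =>
        h.ne (Fin.castSucc_injective _ e)
      have nl : ∀ x : Fin 5, x.castSucc ≠ Fin.last 5 := fun x => Fin.castSucc_ne_last x
      apply tripleFun_ne_zero
      · rintro ⟨h, h'⟩; exact hz _ _ _ (inj hac) (nl a) (nl c) ⟨h, h'.trans hz1.symm⟩
      · rintro ⟨h, h'⟩; exact hz _ _ _ (inj hac) (inj hab) (inj hbc).symm ⟨h, h.trans h'.symm⟩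
      · rintro ⟨h, h'⟩; exact hz _ _ _ (inj hab) (nl a) (nl b) ⟨h'.trans h.symm, h'.trans hz1.symm⟩
      · rintro ⟨h, h'⟩; exact hz _ _ _ (inj hbc) (nl b) (nl c) ⟨h', h.trans hz1.symm⟩⟩
  continuous_toFun := by
    have h := continuous_coord
    exact Continuous.subtype_mk ((((h _).sub (h _)).mul ((h _).sub continuous_const)).add
      (continuous_const.mul (((h _).sub continuous_const).mul ((h _).sub (h _))))) _

/-- The `5 + 10` non-vanishing functions whose windings are counted. -/
def windFun : Fin 5 ⊕ Triple → C(QSet 5, {z : ℂ // z ≠ 0}) := Sum.elim coordFun tripleFun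

/-! ### Loops with independent windings -/

/-- The `i`-th point travels once round the circle. -/
def roundLoop (i : Fin 5) : Path (Qbase 5) (Qbase 5) where
  toFun t := ⟨Function.update (q0 5) i.castSucc (q0 5 i.castSucc * Circle.exp (2 * π * t)), by
    constructor
    · rw [Function.update_of_ne (Fin.castSucc_ne_last i).symm]
      exact (q0_mem 5).1
    · rintro j k l hjk hjl hkl ⟨h1, h2⟩
      have key : ∀ {x y : Fin 6}, x ≠ y → x ≠ i.castSucc → y ≠ i.castSucc →
          Function.update (q0 5) i.castSucc (q0 5 i.castSucc * Circle.exp (2 * π * t)) x ≠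
          Function.update (q0 5) i.castSucc (q0 5 i.castSucc * Circle.exp (2 * π * t)) y := by
        intro x y hxy hx hy h
        rw [Function.update_of_ne hx, Function.update_of_ne hy] at h
        exact hxy (q0_injective 5 h)
      by_cases hj : j = i.castSucc
      · exact key hkl (fun h => hjk (hj.trans h.symm)) (fun h => hjl (hj.trans h.symm))
          (h1.symm.trans h2)
      · by_cases hk : k = i.castSucc
        · exact key hjl hj (fun h => hkl (hk.trans h.symm)) h2
        · exact key hjk hj hk h1⟩
  continuous_toFun := by
    refine Continuous.subtype_mk (continuous_const.update _ ?_) _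
    fun_prop
  source' := Subtype.ext (by simp [Qbase])
  target' := Subtype.ext (by simp [Qbase])

theorem winding_roundLoop (i l : Fin 5) :
    (winding (coordFun l)).toFun (roundLoop i).toContinuousMap =
      if l = i then 2 * π * Complex.I else 0 := by
  let L : C(I, ℂ) := ⟨fun t => Complex.log (q0 5 l.castSucc) +
    (if l = i then 2 * π * Complex.I else 0) * ((t : ℝ) : ℂ), by fun_prop⟩
  refine (windVal_eq _ L ?_).trans ?_
  · intro t
    change Complex.exp (Complex.log (q0 5 l.castSucc) + _ * _) = (Function.update (q0 5) i.castSucc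
      (q0 5 i.castSucc * Circle.exp (2 * π * t)) l.castSucc : Circle)
    rw [Complex.exp_add, Complex.exp_log (Circle.coe_ne_zero _)]
    split_ifs with h
    · subst h
      rw [Function.update_self, Circle.coe_mul, Circle.coe_exp]
      congr 2
      push_cast; ring
    · rw [Function.update_of_ne (fun e => h (Fin.castSucc_injective _ e))]
      simp
  · simp [L]

/-- The real coordinate at time `t` of the `l`-th point on the pinch loop of `s`: the first two
points of `s` follow cosine and sine, the third rests at `0`, and all others stay far to the
right at pairwise distinct places. -/
def pinchCoord (s : Triple) (l : Fin 5) (t : ℝ) : ℝ :=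
  if l = s.1.1 then Real.cos (2 * π * t) else if l = s.1.2.1 then Real.sin (2 * π * t) else
    if l = s.1.2.2 then 0 else 5 + l.val

theorem continuous_pinchCoord (s : Triple) (l : Fin 5) : Continuous (pinchCoord s l) := by
  unfold pinchCoord
  split_ifs <;> fun_prop

theorem pinchCoord_eq (s : Triple) (l : Fin 5) : pinchCoord s l 1 = pinchCoord s l 0 := by
  simp [pinchCoord]

theorem add_I_ne_zero (x : ℝ) : (x : ℂ) + Complex.I ≠ 0 := fun h => by
  simpa using congrArg Complex.im h

theorem sub_I_ne_zero (x : ℝ) : (x : ℂ) - Complex.I ≠ 0 := fun h => by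
  simpa using congrArg Complex.im h

/-- The Cayley transform `x ↦ (x - i) / (x + i)`, from the line onto the circle minus `1`. -/
def cayley (x : ℝ) : Circle := Circle.ofConjDivSelf (x + Complex.I) (add_I_ne_zero x)

theorem coe_cayley (x : ℝ) : (cayley x : ℂ) = (x - Complex.I) / (x + Complex.I) := by
  simp [cayley, Circle.ofConjDivSelf, sub_eq_add_neg]

theorem cayley_ne_one (x : ℝ) : cayley x ≠ 1 := by
  intro h
  have h := congrArg (fun z : Circle => (z : ℂ)) h
  simp only [coe_cayley, Circle.coe_one] at h
  rw [div_eq_one_iff_eq (add_I_ne_zero x)] at h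
  have := congrArg Complex.im h
  simp at this
  norm_num at this

theorem cayley_injective : Function.Injective cayley := by
  intro x y h
  have h := congrArg (fun z : Circle => (z : ℂ)) h
  simp only [coe_cayley] at h
  rw [div_eq_div_iff (add_I_ne_zero x) (add_I_ne_zero y)] at h
  have := congrArg Complex.im h
  simp at this
  linarith

theorem continuous_cayley : Continuous cayley := by
  apply continuous_induced_rng.2
  have : (fun z : Circle => (z : ℂ)) ∘ cayley = fun x : ℝ => (x - Complex.I) / (x + Complex.I) :=
    funext coe_cayley
  change Continuous ((fun z : Circle => (z : ℂ)) ∘ cayley)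
  rw [this]
  exact Continuous.div (by fun_prop) (by fun_prop) add_I_ne_zero

/-- The configuration at time `t` of the pinch loop: the last point is at `1`, the others are moved
from the line to the circle by the Cayley transform. -/
def pinchPoint (s : Triple) (t : ℝ) : Fin 6 → Circle :=
  Fin.lastCases 1 fun l => cayley (pinchCoord s l t)

theorem pinchPoint_last (s : Triple) (t : ℝ) : pinchPoint s t (Fin.last 5) = 1 :=
  Fin.lastCases_last

theorem pinchPoint_castSucc (s : Triple) (t : ℝ) (l : Fin 5) :
    pinchPoint s t l.castSucc = cayley (pinchCoord s l t) :=
  Fin.lastCases_castSucc _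

theorem pinchCoord_not_triple (s : Triple) (t : ℝ) (i j k : Fin 5) (hij : i ≠ j) (hik : i ≠ k)
    (hjk : j ≠ k) (h1 : pinchCoord s i t = pinchCoord s j t)
    (h2 : pinchCoord s i t = pinchCoord s k t) : False := by
  have hc1 := Real.cos_le_one (2 * π * t)
  have hs1 := Real.sin_le_one (2 * π * t)
  have hcs := Real.sin_sq_add_cos_sq (2 * π * t)
  have hv : ∀ x y : Fin 5, x ≠ y → (5 + x.val : ℝ) ≠ 5 + y.val := fun x y h e =>
    h (Fin.ext (by exact_mod_cast add_left_cancel e))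
  have hp : ∀ x : Fin 5, (5 : ℝ) ≤ 5 + x.val := fun x => by simp
  have := hp i; have := hp j; have := hp k
  have := hv i j hij
  have := hv i k hik
  unfold pinchCoord at h1 h2
  generalize s.1.1 = a at *
  generalize s.1.2.1 = b at *
  generalize s.1.2.2 = c at *
  split_ifs at h1 h2 <;> first
    | (exfalso; linarith)
    | (subst_vars; contradiction)
    | (subst_vars; nlinarith)

/-- The pinch loop of the triple `s`: a closed path linking once the stratum where the three points
of `s` coincide. -/
def pinchLoop (s : Triple) : C(I, QSet 5) where
  toFun t := ⟨pinchPoint s t, pinchPoint_last s t, by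
    intro i j k hij hik hjk ⟨h1, h2⟩
    induction i using Fin.lastCases with
    | last =>
      induction j using Fin.lastCases with
      | last => exact hij rfl
      | cast j =>
        rw [pinchPoint_last, pinchPoint_castSucc] at h1
        exact cayley_ne_one _ h1.symm
    | cast i =>
      induction j using Fin.lastCases with
      | last =>
        rw [pinchPoint_last, pinchPoint_castSucc] at h1
        exact cayley_ne_one _ h1
      | cast j =>
        induction k using Fin.lastCases with
        | last =>
          rw [pinchPoint_last, pinchPoint_castSucc] at h2
          exact cayley_ne_one _ h2
        | cast k =>
          rw [pinchPoint_castSucc, pinchPoint_castSucc] at h1 h2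
          exact pinchCoord_not_triple s t i j k (fun h => hij (congrArg _ h))
            (fun h => hik (congrArg _ h)) (fun h => hjk (congrArg _ h))
            (cayley_injective h1) (cayley_injective h2)⟩
  continuous_toFun := by
    refine Continuous.subtype_mk (continuous_pi fun j => ?_) _
    induction j using Fin.lastCases with
    | last => simp only [pinchPoint_last]; exact continuous_const
    | cast l =>
      simp only [pinchPoint_castSucc]
      exact continuous_cayley.comp ((continuous_pinchCoord s l).comp continuous_subtype_val)

theorem pinchLoop_closed (s : Triple) : pinchLoop s 0 = pinchLoop s 1 := by
  refine Subtype.ext (funext fun j => ?_)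
  change pinchPoint s (0 : I) j = pinchPoint s (1 : I) j
  induction j using Fin.lastCases with
  | last => rw [pinchPoint_last, pinchPoint_last]
  | cast l =>
    rw [pinchPoint_castSucc, pinchPoint_castSucc]
    exact congrArg cayley (pinchCoord_eq s l).symm

theorem pinchLoop_apply (s : Triple) (t : I) (l : Fin 5) :
    ((pinchLoop s t).1 l.castSucc : ℂ) =
      (pinchCoord s l t - Complex.I) / (pinchCoord s l t + Complex.I) := by
  rw [← coe_cayley, ← pinchPoint_castSucc]; rfl

/-- A continuous logarithm of `x_l + i` along the pinch loop: the principal one, as `x_l + i` is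
not real. -/
def logPlus (s : Triple) (l : Fin 5) : C(I, ℂ) where
  toFun t := Complex.log (pinchCoord s l t + Complex.I)
  continuous_toFun := by
    have := continuous_pinchCoord s l
    refine Continuous.clog (by fun_prop) fun t => ?_
    rw [Complex.mem_slitPlane_iff]; right; simp

/-- A continuous logarithm of `x_l - i` along the pinch loop. -/
def logMinus (s : Triple) (l : Fin 5) : C(I, ℂ) where
  toFun t := Complex.log (pinchCoord s l t - Complex.I)
  continuous_toFun := by
    have := continuous_pinchCoord s l
    refine Continuous.clog (by fun_prop) fun t => ?_
    rw [Complex.mem_slitPlane_iff]; right; simp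

theorem exp_logPlus (s : Triple) (l : Fin 5) (t : I) :
    Complex.exp (logPlus s l t) = pinchCoord s l t + Complex.I :=
  Complex.exp_log (add_I_ne_zero _)

theorem logPlus_closed (s : Triple) (l : Fin 5) : logPlus s l 1 = logPlus s l 0 := by
  simp [logPlus, pinchCoord_eq]

theorem winding_coord_pinchLoop (s : Triple) (l : Fin 5) :
    (winding (coordFun l)).toFun (pinchLoop s) = 0 := by
  refine (windVal_eq _ (logMinus s l - logPlus s l) ?_).trans ?_
  · intro t
    change Complex.exp (logMinus s l t - logPlus s l t) = (pinchLoop s t).1 l.castSucc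
    rw [Complex.exp_sub, exp_logPlus, pinchLoop_apply]
    congr 1
    exact Complex.exp_log (sub_I_ne_zero _)
  · simp [logPlus, logMinus, pinchCoord_eq]

/-- In the line coordinates `x` the function `tripleFun` is
`4 ((x_a - x_c) + i (x_b - x_c)) / ((x_a + i) (x_b + i) (x_c + i))`, and only the first factor of
the numerator can wind. -/
theorem winding_triple_aux (s s' : Triple) (Λ : C(I, ℂ))
    (hΛ : ∀ t : I, Complex.exp (Λ t) = (pinchCoord s s'.1.1 t - pinchCoord s s'.1.2.2 t) +
      Complex.I * (pinchCoord s s'.1.2.1 t - pinchCoord s s'.1.2.2 t)) :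
    (winding (tripleFun s')).toFun (pinchLoop s) = Λ 1 - Λ 0 := by
  refine (windVal_eq _ (.const _ (Complex.log 4) + Λ - logPlus s s'.1.1 - logPlus s s'.1.2.1 -
    logPlus s s'.1.2.2) ?_).trans ?_
  · intro t
    change Complex.exp (Complex.log 4 + Λ t - logPlus s s'.1.1 t - logPlus s s'.1.2.1 t -
      logPlus s s'.1.2.2 t) =
      ((pinchLoop s t).1 s'.1.1.castSucc - (pinchLoop s t).1 s'.1.2.2.castSucc : ℂ) *
      ((pinchLoop s t).1 s'.1.2.1.castSucc - 1) + Complex.I *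
      (((pinchLoop s t).1 s'.1.1.castSucc - 1) * ((pinchLoop s t).1 s'.1.2.1.castSucc -
        (pinchLoop s t).1 s'.1.2.2.castSucc))
    simp only [Complex.exp_sub, Complex.exp_add, exp_logPlus, hΛ, pinchLoop_apply]
    rw [Complex.exp_log (by norm_num)]
    have ha := add_I_ne_zero (pinchCoord s s'.1.1 t)
    have hb := add_I_ne_zero (pinchCoord s s'.1.2.1 t)
    have hc := add_I_ne_zero (pinchCoord s s'.1.2.2 t)
    have key : ∀ x : ℂ, x + Complex.I ≠ 0 →
        (x - Complex.I) / (x + Complex.I) = 1 - 2 * Complex.I / (x + Complex.I) := by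
      intro x hx; field_simp; ring
    rw [key _ ha, key _ hb, key _ hc]
    have h1 : (pinchCoord s s'.1.1 t - pinchCoord s s'.1.2.2 t : ℂ) =
      (pinchCoord s s'.1.1 t + Complex.I) - (pinchCoord s s'.1.2.2 t + Complex.I) := by ring
    have h2 : (pinchCoord s s'.1.2.1 t - pinchCoord s s'.1.2.2 t : ℂ) =
      (pinchCoord s s'.1.2.1 t + Complex.I) - (pinchCoord s s'.1.2.2 t + Complex.I) := by ring
    rw [h1, h2]
    generalize (pinchCoord s s'.1.1 t + Complex.I : ℂ) = x at *
    generalize (pinchCoord s s'.1.2.1 t + Complex.I : ℂ) = y at *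
    generalize (pinchCoord s s'.1.2.2 t + Complex.I : ℂ) = z at *
    trans 4 * Complex.I ^ 2 * ((z - x) + Complex.I * (z - y)) / (x * y * z)
    · rw [Complex.I_sq]; field_simp; ring
    · field_simp; ring
  · simp only [ContinuousMap.sub_apply, ContinuousMap.add_apply, ContinuousMap.const_apply,
      logPlus_closed]
    ring

/-- For the triple of the loop itself the relevant factor is `exp (2πit)`. -/
theorem winding_triple_self (s : Triple) :
    (winding (tripleFun s)).toFun (pinchLoop s) = 2 * π * Complex.I := by
  refine (winding_triple_aux s s ⟨fun t => (2 * π * (t : ℝ) : ℂ) * Complex.I, by fun_prop⟩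
    fun t => ?_).trans ?_
  · obtain ⟨⟨a, b, c⟩, hab, hbc⟩ := s
    simp only at hab hbc
    have h1 : b ≠ a := hab.ne'
    have h2 : c ≠ a := (hab.trans hbc).ne'
    have h3 : c ≠ b := hbc.ne'
    simp only [pinchCoord, ContinuousMap.coe_mk, if_true, if_neg h1, if_neg h2, if_neg h3,
      Complex.exp_mul_I]
    push_cast
    ring
  · simp

/-- For another triple one of the points compared stays far to the right, so the relevant factor
remains in a half-plane and does not wind. -/
theorem winding_triple_ne (s s' : Triple) (h : s' ≠ s) :
    (winding (tripleFun s')).toFun (pinchLoop s) = 0 := by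
  let G : ℝ → ℂ := fun t => (pinchCoord s s'.1.1 t - pinchCoord s s'.1.2.2 t) +
      Complex.I * (pinchCoord s s'.1.2.1 t - pinchCoord s s'.1.2.2 t)
  have hGc : Continuous G := by
    have := continuous_pinchCoord s
    have h1 := this s'.1.1
    have h2 := this s'.1.2.1
    have h3 := this s'.1.2.2
    fun_prop
  -- The half-plane is `0 < re (u * z)`. As `s` and the other triple differ, some far point is
  -- compared with one of the points of `s`, or else all three points are far, which leaves no
  -- room among five points.
  obtain ⟨u, hu0, hu⟩ : ∃ u : ℂ, u ≠ 0 ∧ ∀ t : ℝ, 0 < (u * G t).re := by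
    have hre : ∀ t, (G t).re = pinchCoord s s'.1.1 t - pinchCoord s s'.1.2.2 t := fun t => by
      simp [G]
    have him : ∀ t, (G t).im = pinchCoord s s'.1.2.1 t - pinchCoord s s'.1.2.2 t := fun t => by
      simp [G]
    obtain ⟨⟨a, b, c⟩, hab, hbc⟩ := s
    obtain ⟨⟨a', b', c'⟩, hab', hbc'⟩ := s'
    simp only at hab hbc hab' hbc' hre him
    have small : ∀ l t, (l = a ∨ l = b ∨ l = c) → pinchCoord ⟨⟨a, b, c⟩, hab, hbc⟩ l t ≤ 1 := by
      intro l t hl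
      unfold pinchCoord
      split_ifs with h1 h2 h3
      · exact Real.cos_le_one _
      · exact Real.sin_le_one _
      · exact zero_le_one
      · simp only at h1 h2 h3; tauto
    have big : ∀ l t, ¬ (l = a ∨ l = b ∨ l = c) → 5 ≤ pinchCoord ⟨⟨a, b, c⟩, hab, hbc⟩ l t := by
      intro l t hl
      push Not at hl
      simp only [pinchCoord, if_neg hl.1, if_neg hl.2.1, if_neg hl.2.2]
      simp
    by_cases hc : c' = a ∨ c' = b ∨ c' = c
    · by_cases ha : a' = a ∨ a' = b ∨ a' = c
      · have hb : ¬ (b' = a ∨ b' = b ∨ b' = c) := by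
          intro hb
          apply h
          simp only [Subtype.mk.injEq, Prod.mk.injEq]
          omega
        refine ⟨-Complex.I, by simp, fun t => ?_⟩
        have := small c' t hc
        have := big b' t hb
        simp [him]; linarith
      · refine ⟨1, by simp, fun t => ?_⟩
        have := small c' t hc
        have := big a' t ha
        simp [hre]; linarith
    · by_cases ha : a' = a ∨ a' = b ∨ a' = c
      · refine ⟨-1, by simp, fun t => ?_⟩
        have := small a' t ha
        have := big c' t hc
        simp [hre]; linarith
      · have hb : b' = a ∨ b' = b ∨ b' = c := by omega
        refine ⟨Complex.I, by simp, fun t => ?_⟩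
        have := small b' t hb
        have := big c' t hc
        simp [him]; linarith
  refine (winding_triple_aux s s' ⟨fun t => Complex.log (u * G t) - Complex.log u, ?_⟩
    fun t => ?_).trans ?_
  · refine (Continuous.clog (by fun_prop) fun t => ?_).sub continuous_const
    exact Complex.mem_slitPlane_iff.2 (Or.inl (hu t))
  · change Complex.exp (Complex.log (u * G t) - Complex.log u) = G t
    rw [Complex.exp_sub, Complex.exp_log hu0, Complex.exp_log, mul_div_cancel_left₀ _ hu0]
    intro h0
    have := hu t
    rw [h0] at this
    simp at this
  · simp [G, pinchCoord_eq]

/-- The homomorphism collecting the increments of the logarithms of the fifteen functions. -/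
def windingHom : Additive (Abelianization (FundamentalGroup (QSet 5) (Qbase 5))) →+
    (Fin 5 ⊕ Triple → ℂ) where
  toFun a s := (winding (windFun s)).hom (Qbase 5) a
  map_zero' := by ext; simp
  map_add' _ _ := by ext; simp

/-- The windings of the pinch loops are the basis vectors of the triples (up to `2πi`), and those of
the round loops are the basis vectors of the coordinates modulo the former. -/
theorem span_windingHom [PathConnectedSpace (QSet 5)] :
    Submodule.span ℂ (Set.range windingHom) = ⊤ := by
  classical
  set V := Submodule.span ℂ (Set.range windingHom) with hV
  have h2pi : (2 * π * Complex.I : ℂ) ≠ 0 := Complex.two_pi_I_ne_zero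
  have hT : ∀ s : Triple, (Pi.single (Sum.inr s) 1 : Fin 5 ⊕ Triple → ℂ) ∈ V := by
    intro s
    let p := PathConnectedSpace.somePath (Qbase 5) (pinchLoop s 0)
    let q : Path (pinchLoop s 0) (pinchLoop s 0) := ⟨pinchLoop s, rfl, (pinchLoop_closed s).symm⟩
    have h : windingHom (loopClass ((p.trans q).trans p.symm)) =
        (2 * π * Complex.I : ℂ) • Pi.single (Sum.inr s) 1 := by
      ext x
      change (winding (windFun x)).hom (Qbase 5) (loopClass _) = _
      rw [PathCocycle.hom_loopClass, PathCocycle.conj]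
      change (winding (windFun x)).toFun (pinchLoop s) = _
      rcases x with l | s'
      · exact (winding_coord_pinchLoop s l).trans (by simp)
      · by_cases h : s' = s
        · subst h
          exact (winding_triple_self s').trans (by simp)
        · exact (winding_triple_ne s s' h).trans (by simp [h])
    have h' : (Pi.single (Sum.inr s) 1 : Fin 5 ⊕ Triple → ℂ) =
        (2 * π * Complex.I : ℂ)⁻¹ • windingHom (loopClass ((p.trans q).trans p.symm)) := by
      rw [h, smul_smul, inv_mul_cancel₀ h2pi, one_smul]
    rw [h']
    exact V.smul_mem _ (Submodule.subset_span ⟨_, rfl⟩)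
  have hF : ∀ i : Fin 5, (Pi.single (Sum.inl i) 1 : Fin 5 ⊕ Triple → ℂ) ∈ V := by
    intro i
    have hi : windingHom (loopClass (roundLoop i)) ∈ V := Submodule.subset_span ⟨_, rfl⟩
    have h : (Pi.single (Sum.inl i) 1 : Fin 5 ⊕ Triple → ℂ) = (2 * π * Complex.I : ℂ)⁻¹ •
        (windingHom (loopClass (roundLoop i)) -
          ∑ s : Triple, windingHom (loopClass (roundLoop i)) (Sum.inr s) •
            (Pi.single (Sum.inr s) 1 : Fin 5 ⊕ Triple → ℂ)) := by
      ext x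
      rcases x with l | s'
      · have : windingHom (loopClass (roundLoop i)) (Sum.inl l) =
            if l = i then 2 * π * Complex.I else 0 := winding_roundLoop i l
        simp only [Pi.smul_apply, Pi.sub_apply, this, Finset.sum_apply, Pi.single_apply, smul_eq_mul,
          Sum.inl.injEq, reduceCtorEq, if_false, mul_zero, Finset.sum_const_zero, sub_zero]
        split_ifs
        · exact (inv_mul_cancel₀ h2pi).symm
        · simp
      · simp [Finset.sum_apply, Pi.single_apply]
    rw [h]
    exact V.smul_mem _ (V.sub_mem hi (V.sum_mem fun s _ => V.smul_mem _ (hT s)))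
  rw [eq_top_iff]
  rintro f -
  have : f = ∑ x, f x • (Pi.single x 1 : Fin 5 ⊕ Triple → ℂ) := by
    ext y; simp [Finset.sum_apply, Pi.single_apply]
  rw [this]
  refine V.sum_mem fun x _ => V.smul_mem _ ?_
  rcases x with i | s
  · exact hF i
  · exact hT s

end

section

open Equiv

/-! ### The graph of chambers and its relations -/

open Equiv

/-- The moves between chambers: a chamber is given by the order `σ 0, …, σ 4` of the five points on
the circle cut at `1`. The first four moves exchange neighbours, the last one carries the first
point through `1` to the last place. -/
def gen : Fin 5 → Perm (Fin 5) :=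
  ![swap 0 1, swap 1 2, swap 2 3, swap 3 4, finRotate 5]

/-- A permutation as the number with base-`5` digits `σ 0, …, σ 4`. The finite computation below
runs on these numbers. -/
def code (σ : Perm (Fin 5)) : ℕ :=
  (σ 0).val + 5 * (σ 1).val + 25 * (σ 2).val + 125 * (σ 3).val + 625 * (σ 4).val

/-- Exchange of the digits of `c` at the adjacent places `p` and `q = 5 * p`. -/
def swapCode (p q c : ℕ) : ℕ :=
  c + (c / q % 5 + 5 * (c / p % 5)) * p - (c / p % 5 + 5 * (c / q % 5)) * p

/-- The effect of right multiplication by `gen` on codes. -/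
def opCode : Fin 5 → ℕ → ℕ :=
  ![swapCode 1 5, swapCode 5 25, swapCode 25 125, swapCode 125 625,
    fun c => c / 5 + c % 5 * 625]

theorem code_mul_gen (σ : Perm (Fin 5)) (g : Fin 5) : code (σ * gen g) = opCode g (code σ) := by
  have h0 := (σ 0).isLt
  have h1 := (σ 1).isLt
  have h2 := (σ 2).isLt
  have h3 := (σ 3).isLt
  have h4 := (σ 4).isLt
  have e : ∀ g i, (σ * gen g) i = σ (gen g i) := fun _ _ => rfl
  have d0 : code σ % 5 = σ 0 := by unfold code; omega
  have d1 : code σ / 5 % 5 = σ 1 := by unfold code; omega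
  have d2 : code σ / 25 % 5 = σ 2 := by unfold code; omega
  have d3 : code σ / 125 % 5 = σ 3 := by unfold code; omega
  have d4 : code σ / 625 % 5 = σ 4 := by unfold code; omega
  simp only [code] at d0 d1 d2 d3 d4
  fin_cases g
  · have a0 : gen 0 0 = 1 := by decide
    have a1 : gen 0 1 = 0 := by decide
    have a2 : gen 0 2 = 2 := by decide
    have a3 : gen 0 3 = 3 := by decide
    have a4 : gen 0 4 = 4 := by decide
    simp only [code, e, Fin.zero_eta, a0, a1, a2, a3, a4, opCode, swapCode, Matrix.cons_val]
    rw [Nat.div_one, d0, d1]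
    omega
  · have a0 : gen 1 0 = 0 := by decide
    have a1 : gen 1 1 = 2 := by decide
    have a2 : gen 1 2 = 1 := by decide
    have a3 : gen 1 3 = 3 := by decide
    have a4 : gen 1 4 = 4 := by decide
    simp only [code, e, Fin.mk_one, a0, a1, a2, a3, a4, opCode, swapCode, Matrix.cons_val]
    rw [d1, d2]
    omega
  · have a0 : gen 2 0 = 0 := by decide
    have a1 : gen 2 1 = 1 := by decide
    have a2 : gen 2 2 = 3 := by decide
    have a3 : gen 2 3 = 2 := by decide
    have a4 : gen 2 4 = 4 := by decide
    simp only [code, e, Fin.reduceFinMk, a0, a1, a2, a3, a4, opCode, swapCode, Matrix.cons_val]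
    rw [d2, d3]
    omega
  · have a0 : gen 3 0 = 0 := by decide
    have a1 : gen 3 1 = 1 := by decide
    have a2 : gen 3 2 = 2 := by decide
    have a3 : gen 3 3 = 4 := by decide
    have a4 : gen 3 4 = 3 := by decide
    simp only [code, e, Fin.reduceFinMk, a0, a1, a2, a3, a4, opCode, swapCode, Matrix.cons_val]
    rw [d3, d4]
    omega
  · have a0 : gen 4 0 = 1 := by decide
    have a1 : gen 4 1 = 2 := by decide
    have a2 : gen 4 2 = 3 := by decide
    have a3 : gen 4 3 = 4 := by decide
    have a4 : gen 4 4 = 0 := by decide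
    simp only [code, e, Fin.reduceFinMk, a0, a1, a2, a3, a4, opCode, Matrix.cons_val]
    omega

theorem code_injective : Function.Injective code := by
  intro σ τ h
  have hs : ∀ (ρ : Perm (Fin 5)) i, (ρ i).val < 5 := fun ρ i => (ρ i).isLt
  have := hs σ 0; have := hs σ 1; have := hs σ 2; have := hs σ 3; have := hs σ 4
  have := hs τ 0; have := hs τ 1; have := hs τ 2; have := hs τ 3; have := hs τ 4
  simp only [code] at h
  ext i
  fin_cases i <;> simp only [Fin.zero_eta, Fin.mk_one, Fin.reduceFinMk] <;> omega

/-- A normal form for each permutation: words in the adjacent transpositions, last letter first.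
The list is closed under removal of the last letter, so it describes a spanning tree of the
graph of chambers. -/
def words : List (List (Fin 5)) := do
  let a ← [[], [3], [2, 3], [1, 2, 3], [0, 1, 2, 3]]
  let b ← [[], [2], [1, 2], [0, 1, 2]]
  let c ← [[], [1], [0, 1]]
  let d ← [[], [0]]
  return a ++ b ++ c ++ d

/-- The permutation spelled by a word. -/
def wordPerm : List (Fin 5) → Perm (Fin 5)
  | [] => 1
  | g :: w => wordPerm w * gen g

/-- The code of the permutation spelled by a word; `2930` is the code of the identity. -/
def wordCode : List (Fin 5) → ℕ
  | [] => 2930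
  | g :: w => opCode g (wordCode w)

theorem code_wordPerm (w : List (Fin 5)) : code (wordPerm w) = wordCode w := by
  induction w with
  | nil => rfl
  | cons g w ih => rw [wordPerm, code_mul_gen, ih, wordCode]

theorem words_nodup : (words.map wordCode).Nodup := by decide +kernel

theorem words_tail : ∀ w ∈ words, w.tail ∈ words := by decide +kernel

/-- The `120` words have distinct codes, so they exhaust the `120` permutations. -/
theorem words_complete (σ : Perm (Fin 5)) : ∃ w ∈ words, wordPerm w = σ := by
  have hinj : ∀ v ∈ words, ∀ w ∈ words, wordPerm v = wordPerm w → v = w := by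
    intro v hv w hw h
    exact List.inj_on_of_nodup_map words_nodup hv hw
      (by rw [← code_wordPerm, ← code_wordPerm, h])
  have hnd : words.Nodup := List.Nodup.of_map _ words_nodup
  have hcard : (words.toFinset.image wordPerm).card = Fintype.card (Perm (Fin 5)) := by
    rw [Finset.card_image_of_injOn, List.toFinset_card_of_nodup hnd, Fintype.card_perm]
    · decide +kernel
    · intro v hv w hw h
      simp only [List.coe_toFinset, Set.mem_ofPred_eq] at hv hw
      exact hinj v hv w hw h
  have := (Finset.card_eq_iff_eq_univ _).1 hcard
  have h : σ ∈ words.toFinset.image wordPerm := this ▸ Finset.mem_univ σ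
  simpa using h

/-- The number of the directed edge leaving the chamber with code `c` by the move `g`. -/
def edge (c : ℕ) (g : Fin 5) : ℕ := 5 * c + g.val

/-- Pairs of moves whose walls meet in codimension two: `(g, h, g', h')` stands for the relation
that `g` followed by `h` agrees with `g'` followed by `h'`. -/
def squares : List (Fin 5 × Fin 5 × Fin 5 × Fin 5) :=
  [(0, 2, 2, 0), (0, 3, 3, 0), (1, 3, 3, 1), (1, 4, 4, 0), (2, 4, 4, 1), (3, 4, 4, 2)]

/-- All relations between the edges: `[e, e']` for an edge and its inverse, with values summing to
zero, and `[a, b, c, d]` for a square, with `a + b = c + d` on values. -/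
def rels : List (List ℕ) := words.flatMap fun w =>
  ([0, 1, 2, 3].map fun i => [edge (wordCode w) i, edge (opCode i (wordCode w)) i]) ++
  squares.map fun q => [edge (wordCode w) q.1, edge (opCode q.1 (wordCode w)) q.2.1,
    edge (wordCode w) q.2.2.1, edge (opCode q.2.2.1 (wordCode w)) q.2.2.2]

/-- With the bits of `m` marking known edges, a relation all of whose edges but one are known
makes that edge known too. -/
def propagate (m : ℕ) (es : List ℕ) : ℕ :=
  match es.filter (fun e => !m.testBit e) with
  | [e] => m ||| 2 ^ e
  | _ => m

/-- Apply `k` to `m`, evaluating `m` to a numeral first: the recursor makes the kernel do so. -/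
def force {α : Type*} (m : ℕ) (k : ℕ → α) : α := Nat.rec (k 0) (fun n _ => k (n + 1)) m

theorem force_eq {α : Type*} (m : ℕ) (k : ℕ → α) : force m k = k m := by cases m <;> rfl

/-- Propagation along a list of relations. -/
def propagateAll : List (List ℕ) → ℕ → ℕ
  | [], m => m
  | es :: l, m => force (propagate m es) (propagateAll l)

/-- The edge of the spanning tree which ends at the chamber spelled by a word. -/
def treeEdge : List (Fin 5) → List ℕ
  | [] => []
  | g :: w => [edge (wordCode w) g]

/-- Fifteen edges from which, together with the spanning tree, propagation reaches every edge. -/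
def seeds : List ℕ := [9154, 11153, 7353, 14434, 2714, 9733, 13514, 3613, 10113, 6733, 7394, 8891,
  8274, 3694, 10772]

/-- The edges known at the start: the seeds and the spanning tree. -/
def mask₀ : ℕ := (seeds ++ words.flatMap treeEdge).foldl (fun m e => m ||| 2 ^ e) 0

/-- The edges known after three passes through the relations. -/
def mask₁ : ℕ := force mask₀ (propagateAll (rels ++ rels ++ rels))

theorem mask₁_full : (force mask₁ fun m => words.all fun w => (List.finRange 5).all fun g =>
    m.testBit (edge (wordCode w) g)) = true := by decide +kernel

theorem edge_injective {σ τ : Perm (Fin 5)} {g h : Fin 5} (e : edge (code σ) g = edge (code τ) h) :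
    g = h ∧ σ = τ := by
  have := g.isLt
  have := h.isLt
  unfold edge at e
  exact ⟨Fin.ext (by omega), code_injective (by omega)⟩

theorem gen_squares : ∀ q ∈ squares, gen q.1 * gen q.2.1 = gen q.2.2.1 * gen q.2.2.2 := by
  decide +kernel

theorem gen_swap_mul_self : ∀ g ∈ ([0, 1, 2, 3] : List (Fin 5)), gen g * gen g = 1 := by
  decide

/-- If the values at the known edges lie in a subgroup, they still do after propagation. -/
theorem propagate_sound {M : Type*} [AddCommGroup M] (H : AddSubgroup M) (v : ℕ → M) (es : List ℕ)
    (hes : (∃ a b, es = [a, b] ∧ v a + v b = 0) ∨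
      ∃ a b c d, es = [a, b, c, d] ∧ v a + v b = v c + v d)
    (m : ℕ) (hm : ∀ e, m.testBit e = true → v e ∈ H) :
    ∀ e, (propagate m es).testBit e = true → v e ∈ H := by
  intro e he
  unfold propagate at he
  split at he
  · rename_i x hx
    rw [Nat.testBit_lor, Bool.or_eq_true, Nat.testBit_two_pow] at he
    rcases he with he | he
    · exact hm e he
    have he : x = e := by simpa using he
    subst he
    have hall : ∀ y ∈ es, y = x ∨ v y ∈ H := by
      intro y hy
      by_cases hb : m.testBit y = true
      · exact Or.inr (hm y hb)
      · left
        have : y ∈ es.filter (fun e => !m.testBit e) := by simp [hy, hb]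
        rw [hx] at this
        simpa using this
    rcases hes with ⟨a, b, rfl, h⟩ | ⟨a, b, c, d, rfl, h⟩
    · by_cases ha : m.testBit a = true <;> by_cases hb : m.testBit b = true <;>
        simp [ha, hb] at hx
      · subst hx
        rw [eq_neg_of_add_eq_zero_right h]; exact neg_mem (hm _ ha)
      · subst hx
        rw [eq_neg_of_add_eq_zero_left h]; exact neg_mem (hm _ hb)
    · by_cases ha : m.testBit a = true <;> by_cases hb : m.testBit b = true <;>
        by_cases hc : m.testBit c = true <;> by_cases hd : m.testBit d = true <;>
        simp [ha, hb, hc, hd] at hx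
      · subst hx
        have : v d = v a + v b - v c := by rw [h]; abel
        rw [this]; exact sub_mem (add_mem (hm _ ha) (hm _ hb)) (hm _ hc)
      · subst hx
        have : v c = v a + v b - v d := by rw [h]; abel
        rw [this]; exact sub_mem (add_mem (hm _ ha) (hm _ hb)) (hm _ hd)
      · subst hx
        have : v b = v c + v d - v a := by rw [← h]; abel
        rw [this]; exact sub_mem (add_mem (hm _ hc) (hm _ hd)) (hm _ ha)
      · subst hx
        have : v a = v c + v d - v b := by rw [← h]; abel
        rw [this]; exact sub_mem (add_mem (hm _ hc) (hm _ hd)) (hm _ hb)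
  · exact hm e he

theorem propagateAll_sound {M : Type*} [AddCommGroup M] (H : AddSubgroup M) (v : ℕ → M)
    (l : List (List ℕ)) (hl : ∀ es ∈ l, (∃ a b, es = [a, b] ∧ v a + v b = 0) ∨
      ∃ a b c d, es = [a, b, c, d] ∧ v a + v b = v c + v d) :
    ∀ (m : ℕ), (∀ e, m.testBit e = true → v e ∈ H) →
    ∀ e, (propagateAll l m).testBit e = true → v e ∈ H := by
  induction l with
  | nil => exact fun m hm => hm
  | cons es l ih =>
    intro m hm
    rw [propagateAll, force_eq]
    exact ih (fun x hx => hl x (List.mem_cons_of_mem _ hx)) _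
      (propagate_sound H v es (hl es List.mem_cons_self) m hm)

theorem foldl_testBit (l : List ℕ) (m e : ℕ)
    (h : (l.foldl (fun m e => m ||| 2 ^ e) m).testBit e = true) : m.testBit e = true ∨ e ∈ l := by
  induction l generalizing m with
  | nil => exact Or.inl h
  | cons x l ih =>
    rcases ih _ h with h | h
    · rw [Nat.testBit_lor, Bool.or_eq_true, Nat.testBit_two_pow] at h
      rcases h with h | h
      · exact Or.inl h
      · have h : x = e := by simpa using h
        simp [h]
    · simp [h]

/-- The sum of `k` along the spanning tree. -/
def potential {M : Type*} [AddCommGroup M] (k : Fin 5 → Perm (Fin 5) → M) : List (Fin 5) → M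
  | [] => 0
  | g :: w => potential k w + k g (wordPerm w)

/-- The upper bound in combinatorial form. A function on the edges of the graph of chambers which
satisfies the inverse and square relations takes, up to the coboundary of some `a`, all its values
in a subgroup with fifteen generators. Here `a` is the sum along the spanning tree, which makes the
tree edges vanish, and the generators are the values at `seeds`. -/
theorem exists_generators {M : Type*} [AddCommGroup M] (k : Fin 5 → Perm (Fin 5) → M)
    (hinv : ∀ g ∈ ([0, 1, 2, 3] : List (Fin 5)), ∀ σ, k g σ + k g (σ * gen g) = 0)
    (hsq : ∀ q ∈ squares, ∀ σ, k q.1 σ + k q.2.1 (σ * gen q.1) =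
      k q.2.2.1 σ + k q.2.2.2 (σ * gen q.2.2.1)) :
    ∃ (a : Perm (Fin 5) → M) (S : Fin 15 → M), ∀ g σ,
      k g σ - (a (σ * gen g) - a σ) ∈ AddSubgroup.closure (Set.range S) := by
  classical
  choose W hW hWσ using words_complete
  have hWw : ∀ w ∈ words, W (wordPerm w) = w := by
    intro w hw
    exact List.inj_on_of_nodup_map words_nodup (hW _) hw
      (by rw [← code_wordPerm, ← code_wordPerm, hWσ])
  set a : Perm (Fin 5) → M := fun σ => potential k (W σ) with ha
  set k' : Fin 5 → Perm (Fin 5) → M := fun g σ => k g σ - (a (σ * gen g) - a σ) with hk₂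
  -- the values of `k'` by edge numbers, with `0` at numbers which are not those of edges
  let v : ℕ → M := fun e => if h : ∃ p : Fin 5 × Perm (Fin 5), edge (code p.2) p.1 = e then
    k' h.choose.1 h.choose.2 else 0
  have hv : ∀ g σ, v (edge (code σ) g) = k' g σ := by
    intro g σ
    have h : ∃ p : Fin 5 × Perm (Fin 5), edge (code p.2) p.1 = edge (code σ) g := ⟨(g, σ), rfl⟩
    simp only [v, dif_pos h]
    obtain ⟨h1, h2⟩ := edge_injective h.choose_spec
    rw [h1, h2]
  have hvw : ∀ w g, v (edge (wordCode w) g) = k' g (wordPerm w) := fun w g => by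
    rw [← code_wordPerm, hv]
  have hvw' : ∀ w g h, v (edge (opCode h (wordCode w)) g) = k' g (wordPerm w * gen h) :=
    fun w g h => by rw [← code_wordPerm, ← code_mul_gen, hv]
  have hlen : seeds.length = 15 := rfl
  let S : Fin 15 → M := fun j => v (seeds.get (j.cast hlen.symm))
  refine ⟨a, S, ?_⟩
  set H := AddSubgroup.closure (Set.range S) with hH
  have hrels : ∀ es ∈ rels, (∃ a b, es = [a, b] ∧ v a + v b = 0) ∨
      ∃ a b c d, es = [a, b, c, d] ∧ v a + v b = v c + v d := by
    intro es hes
    rw [rels, List.mem_flatMap] at hes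
    obtain ⟨w, -, hes⟩ := hes
    rw [List.mem_append, List.mem_map, List.mem_map] at hes
    rcases hes with ⟨i, hi, rfl⟩ | ⟨q, hq, rfl⟩
    · refine Or.inl ⟨_, _, rfl, ?_⟩
      rw [hvw, hvw']
      simp only [hk₂, mul_assoc, gen_swap_mul_self i hi, mul_one]
      rw [← hinv i hi (wordPerm w)]
      abel
    · refine Or.inr ⟨_, _, _, _, rfl, ?_⟩
      rw [hvw, hvw', hvw, hvw']
      have := hsq q hq (wordPerm w)
      simp only [hk₂, mul_assoc, gen_squares q hq]
      rw [← sub_eq_zero] at this ⊢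
      rw [← this]
      abel
  have h0 : ∀ e, mask₀.testBit e = true → v e ∈ H := by
    intro e he
    rcases foldl_testBit _ _ _ he with he | he
    · simp at he
    rw [List.mem_append, List.mem_flatMap] at he
    rcases he with he | ⟨w, hw, he⟩
    · obtain ⟨j, hj, rfl⟩ := List.getElem_of_mem he
      exact AddSubgroup.subset_closure ⟨⟨j, hj⟩, rfl⟩
    · cases w with
      | nil => simp [treeEdge] at he
      | cons g w =>
        have hw' : w ∈ words := words_tail _ hw
        simp only [treeEdge, List.mem_singleton] at he
        rw [he, hvw]
        have e1 : wordPerm w * gen g = wordPerm (g :: w) := rfl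
        have : k' g (wordPerm w) = 0 := by
          simp only [hk₂, ha, e1, hWw _ hw, hWw _ hw', potential]
          abel
        rw [this]; exact zero_mem _
  have h1 : ∀ e, mask₁.testBit e = true → v e ∈ H := by
    rw [mask₁, force_eq]
    refine propagateAll_sound H v _ ?_ _ h0
    intro es hes
    simp only [List.mem_append] at hes
    exact hrels es (by tauto)
  intro g σ
  obtain ⟨w, hw, rfl⟩ := words_complete σ
  have := mask₁_full
  rw [force_eq, List.all_eq_true] at this
  have := this w hw
  rw [List.all_eq_true] at this
  have := h1 _ (this g (List.mem_finRange g))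
  rwa [hvw] at this

end

section

open Topology Equiv

/-! ### Admissible vectors -/

/-- The map `θ ↦ (exp 2πiθ₀, …, exp 2πiθ₄, 1)`, the universal covering of the torus of
configurations whose last point is `1`. -/
def expMap (θ : Fin 5 → ℝ) : Fin 6 → Circle :=
  Fin.lastCases 1 fun l => Circle.exp (2 * π * θ l)

theorem expMap_last (θ : Fin 5 → ℝ) : expMap θ (Fin.last 5) = 1 := Fin.lastCases_last

theorem expMap_castSucc (θ : Fin 5 → ℝ) (l : Fin 5) :
    expMap θ l.castSucc = Circle.exp (2 * π * θ l) := Fin.lastCases_castSucc _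

theorem continuous_expMap : Continuous expMap := by
  refine continuous_pi fun j => ?_
  induction j using Fin.lastCases with
  | last => simp only [expMap_last]; exact continuous_const
  | cast l => simp only [expMap_castSucc]; fun_prop

theorem exp_eq_exp_iff (x y : ℝ) :
    Circle.exp (2 * π * x) = Circle.exp (2 * π * y) ↔ ∃ m : ℤ, x = y + m := by
  rw [Circle.exp_eq_exp]
  refine exists_congr fun m => ?_
  have : (2 * π : ℝ) ≠ 0 := by positivity
  rw [show 2 * π * y + m * (2 * π) = 2 * π * (y + m) by ring]
  exact (mul_right_injective₀ this).eq_iff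

/-- The admissible vectors: those lying over the configuration space. -/
def Adm : Set (Fin 5 → ℝ) := {θ | expMap θ ∈ QSet 5}

/-- An integer vector as a real vector. -/
def ofInt (n : Fin 5 → ℤ) : Fin 5 → ℝ := fun i => n i

theorem ofInt_add (m n : Fin 5 → ℤ) : ofInt (m + n) = ofInt m + ofInt n := by
  ext i; simp [ofInt]

theorem expMap_add_ofInt (θ : Fin 5 → ℝ) (n : Fin 5 → ℤ) : expMap (θ + ofInt n) = expMap θ := by
  funext j
  induction j using Fin.lastCases with
  | last => rw [expMap_last, expMap_last]
  | cast l =>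
    rw [expMap_castSucc, expMap_castSucc, exp_eq_exp_iff]
    exact ⟨n l, rfl⟩

/-- Admissibility in terms of congruences modulo `1`: no two coordinates are integers, and no three
are congruent. -/
theorem mem_Adm_iff (θ : Fin 5 → ℝ) : θ ∈ Adm ↔
    (∀ l m : Fin 5, l ≠ m → (∃ k : ℤ, θ l = k) → ¬ ∃ k : ℤ, θ m = k) ∧
    ∀ l m r : Fin 5, l ≠ m → l ≠ r → m ≠ r →
      (∃ k : ℤ, θ l = θ m + k) → ¬ ∃ k : ℤ, θ l = θ r + k := by
  have h1 : ∀ l : Fin 5, expMap θ l.castSucc = expMap θ (Fin.last 5) ↔ ∃ k : ℤ, θ l = k := by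
    intro l
    have := exp_eq_exp_iff (θ l) 0
    simp only [mul_zero, Circle.exp_zero, zero_add] at this
    rw [expMap_castSucc, expMap_last, this]
  have h2 : ∀ l m : Fin 5, expMap θ l.castSucc = expMap θ m.castSucc ↔ ∃ k : ℤ, θ l = θ m + k := by
    intro l m
    rw [expMap_castSucc, expMap_castSucc, exp_eq_exp_iff]
  have inj : ∀ {l m : Fin 5}, l ≠ m → l.castSucc ≠ m.castSucc := fun h e =>
    h (Fin.castSucc_injective _ e)
  constructor
  · rintro ⟨-, h⟩
    refine ⟨fun l m hlm hl hm => ?_, fun l m r hlm hlr hmr hl hr => ?_⟩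
    · exact h l.castSucc m.castSucc (Fin.last 5) (inj hlm) (Fin.castSucc_ne_last _)
        (Fin.castSucc_ne_last _) ⟨((h1 l).2 hl).trans ((h1 m).2 hm).symm, (h1 l).2 hl⟩
    · exact h _ _ _ (inj hlm) (inj hlr) (inj hmr) ⟨(h2 l m).2 hl, (h2 l r).2 hr⟩
  · rintro ⟨ha, hb⟩
    refine ⟨expMap_last θ, ?_⟩
    rintro i j k hij hik hjk ⟨e1, e2⟩
    induction i using Fin.lastCases with
    | last =>
      induction j using Fin.lastCases with
      | last => exact hij rfl
      | cast j =>
        induction k using Fin.lastCases with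
        | last => exact hik rfl
        | cast k =>
          exact ha j k (fun h => hjk (congrArg _ h)) ((h1 j).1 e1.symm) ((h1 k).1 e2.symm)
    | cast i =>
      induction j using Fin.lastCases with
      | last =>
        induction k using Fin.lastCases with
        | last => exact hjk rfl
        | cast k =>
          exact ha i k (fun h => hik (congrArg _ h)) ((h1 i).1 e1) ((h1 k).1 (e2.symm.trans e1))
      | cast j =>
        induction k using Fin.lastCases with
        | last =>
          exact ha i j (fun h => hij (congrArg _ h)) ((h1 i).1 e2) ((h1 j).1 (e1.symm.trans e2))
        | cast k =>
          exact hb i j k (fun h => hij (congrArg _ h)) (fun h => hik (congrArg _ h))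
            (fun h => hjk (congrArg _ h)) ((h2 i j).1 e1) ((h2 i k).1 e2)

theorem isOpen_Adm : IsOpen Adm := by
  have : Adm = ⋂ i : Fin 6, ⋂ j : Fin 6, ⋂ k : Fin 6, {θ | i ≠ j → i ≠ k → j ≠ k →
      ¬(expMap θ i = expMap θ j ∧ expMap θ i = expMap θ k)} := by
    ext θ
    simp only [Set.mem_iInter, Set.mem_ofPred_eq]
    exact ⟨fun h => h.2, fun h => ⟨expMap_last θ, h⟩⟩
  rw [this]
  refine isOpen_iInter_of_finite fun i => isOpen_iInter_of_finite fun j =>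
    isOpen_iInter_of_finite fun k => ?_
  by_cases h : i ≠ j ∧ i ≠ k ∧ j ≠ k
  · simp only [h.1, h.2.1, h.2.2, ne_eq, not_false_eq_true, forall_const]
    have hc : ∀ j, Continuous fun θ => expMap θ j := fun j =>
      (continuous_apply j).comp continuous_expMap
    exact ((isClosed_eq (hc i) (hc j)).inter (isClosed_eq (hc i) (hc k))).isOpen_compl
  · convert isOpen_univ
    ext θ
    simp only [Set.mem_ofPred_eq, Set.mem_univ, iff_true]
    intro h1 h2 h3
    exact absurd ⟨h1, h2, h3⟩ h

/-! ### Chambers -/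

/-- The closed simplex `0 ≤ θ (σ 0) ≤ … ≤ θ (σ 4) ≤ 1` in the unit cube. -/
def Alcove (σ : Perm (Fin 5)) : Set (Fin 5 → ℝ) :=
  {θ | 0 ≤ θ (σ 0) ∧ θ (σ 0) ≤ θ (σ 1) ∧ θ (σ 1) ≤ θ (σ 2) ∧ θ (σ 2) ≤ θ (σ 3) ∧
    θ (σ 3) ≤ θ (σ 4) ∧ θ (σ 4) ≤ 1}

/-- The admissible part of the simplex `Alcove σ`: neighbours in the cyclic order
`0, θ (σ 0), …, θ (σ 4), 1` may coincide, but not three in a row. -/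
def Chamber (σ : Perm (Fin 5)) : Set (Fin 5 → ℝ) :=
  {θ | θ ∈ Alcove σ ∧ 0 < θ (σ 1) ∧ θ (σ 3) < 1 ∧ θ (σ 0) < θ (σ 2) ∧ θ (σ 1) < θ (σ 3) ∧
    θ (σ 2) < θ (σ 4) ∧ θ (σ 4) < θ (σ 0) + 1}

theorem isClosed_Alcove (σ : Perm (Fin 5)) : IsClosed (Alcove σ) := by
  unfold Alcove
  refine IsClosed.and ?_ (IsClosed.and ?_ (IsClosed.and ?_ (IsClosed.and ?_ (IsClosed.and ?_ ?_)))) <;>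
    exact isClosed_le (by fun_prop) (by fun_prop)

theorem convex_Chamber (σ : Perm (Fin 5)) : Convex ℝ (Chamber σ) := by
  rintro x ⟨⟨x1, x2, x3, x4, x5, x6⟩, y1, y2, y3, y4, y5, y6⟩
    x' ⟨⟨x1', x2', x3', x4', x5', x6'⟩, y1', y2', y3', y4', y5', y6'⟩ a b ha hb hab
  have le : ∀ {p q p' q' : ℝ}, p ≤ q → p' ≤ q' → a * p + b * p' ≤ a * q + b * q' := by
    intro p q p' q' h h'
    gcongr
  have lt : ∀ {p q p' q' : ℝ}, p < q → p' < q' → a * p + b * p' < a * q + b * q' := by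
    intro p q p' q' h h'
    rcases ha.eq_or_lt with rfl | ha
    · have : b = 1 := by linarith
      subst this; linarith
    · have := mul_lt_mul_of_pos_left h ha
      have := mul_le_mul_of_nonneg_left h'.le hb
      linarith
  have := le x1 x1'
  have := le x2 x2'
  have := le x3 x3'
  have := le x4 x4'
  have := le x5 x5'
  have := le x6 x6'
  have := lt y1 y1'
  have := lt y2 y2'
  have := lt y3 y3'
  have := lt y4 y4'
  have := lt y5 y5'
  have := lt y6 y6'
  refine ⟨⟨?_, ?_, ?_, ?_, ?_, ?_⟩, ?_, ?_, ?_, ?_, ?_, ?_⟩ <;>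
    simp only [Pi.add_apply, Pi.smul_apply, smul_eq_mul] <;> linarith

/-- Points at distance at least two in the order are incongruent modulo `1`. -/
theorem Chamber_gap {σ : Perm (Fin 5)} {θ : Fin 5 → ℝ} (h : θ ∈ Chamber σ) {p r : Fin 5}
    (hpr : p.val + 2 ≤ r.val) : θ (σ p) < θ (σ r) ∧ θ (σ r) < θ (σ p) + 1 := by
  obtain ⟨⟨x1, x2, x3, x4, x5, x6⟩, y1, y2, y3, y4, y5, y6⟩ := h
  fin_cases p <;> fin_cases r <;> simp at hpr ⊢ <;> constructor <;> linarith

theorem not_int_of_lt {x y : ℝ} (h1 : x < y) (h2 : y < x + 1) (k : ℤ) : y ≠ x + k := by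
  intro h
  have h3 : (0 : ℝ) < k := by linarith
  have h4 : (k : ℝ) < 1 := by linarith
  have h5 : 0 < k := by exact_mod_cast h3
  have h6 : k < 1 := by exact_mod_cast h4
  omega

theorem Chamber_subset_Adm (σ : Perm (Fin 5)) : Chamber σ ⊆ Adm := by
  intro θ h
  rw [mem_Adm_iff]
  have hint : ∀ p : Fin 5, (∃ k : ℤ, θ (σ p) = k) →
      p = 0 ∧ θ (σ p) = 0 ∨ p = 4 ∧ θ (σ p) = 1 := by
    rintro p ⟨k, hk⟩
    obtain ⟨⟨x1, x2, x3, x4, x5, x6⟩, y1, y2, y3, y4, y5, y6⟩ := h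
    have n1 : 0 < θ (σ p) → θ (σ p) < 1 → False := fun h1 h2 =>
      not_int_of_lt h1 (by linarith) k (by linarith)
    fin_cases p
    · left; refine ⟨rfl, ?_⟩
      by_contra h0
      exact n1 (lt_of_le_of_ne x1 (Ne.symm h0)) (by simp; linarith)
    · exact (n1 (by simp; linarith) (by simp; linarith)).elim
    · exact (n1 (by simp; linarith) (by simp; linarith)).elim
    · exact (n1 (by simp; linarith) (by simp; linarith)).elim
    · right; refine ⟨rfl, ?_⟩
      by_contra h0
      exact n1 (by simp; linarith) (lt_of_le_of_ne x6 h0)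
  have hgap : ∀ p r : Fin 5, p.val + 2 ≤ r.val → ¬ ∃ k : ℤ, θ (σ r) = θ (σ p) + k := by
    rintro p r hpr ⟨k, hk⟩
    obtain ⟨h1, h2⟩ := Chamber_gap h hpr
    exact not_int_of_lt h1 h2 k hk
  have hgap' : ∀ p r : Fin 5, p.val + 2 ≤ r.val ∨ r.val + 2 ≤ p.val →
      ¬ ∃ k : ℤ, θ (σ r) = θ (σ p) + k := by
    rintro p r (hpr | hpr)
    · exact hgap p r hpr
    · rintro ⟨k, hk⟩
      exact hgap r p hpr ⟨-k, by push_cast; linarith⟩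
  constructor
  · intro l m hlm hl hm
    obtain ⟨p, rfl⟩ := σ.surjective l
    obtain ⟨q, rfl⟩ := σ.surjective m
    have := h.2.2.2.2.2.2
    rcases hint p hl with ⟨rfl, hp⟩ | ⟨rfl, hp⟩ <;> rcases hint q hm with ⟨rfl, hq⟩ | ⟨rfl, hq⟩
    · exact hlm rfl
    · linarith
    · linarith
    · exact hlm rfl
  · intro l m r hlm hlr hmr ⟨k, hk⟩ ⟨k', hk'⟩
    obtain ⟨p, rfl⟩ := σ.surjective l
    obtain ⟨q, rfl⟩ := σ.surjective m
    obtain ⟨s, rfl⟩ := σ.surjective r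
    have h1 : p ≠ q := fun e => hlm (congrArg σ e)
    have h2 : p ≠ s := fun e => hlr (congrArg σ e)
    have h3 : q ≠ s := fun e => hmr (congrArg σ e)
    by_cases c1 : q.val + 2 ≤ p.val ∨ p.val + 2 ≤ q.val
    · exact hgap' q p c1 ⟨k, hk⟩
    by_cases c2 : s.val + 2 ≤ p.val ∨ p.val + 2 ≤ s.val
    · exact hgap' s p c2 ⟨k', hk'⟩
    · exact hgap' s q (by omega) ⟨k' - k, by push_cast; linarith⟩

theorem mem_Chamber_of_Adm {σ : Perm (Fin 5)} {θ : Fin 5 → ℝ} (h : θ ∈ Adm) (hA : θ ∈ Alcove σ) :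
    θ ∈ Chamber σ := by
  rw [mem_Adm_iff] at h
  obtain ⟨ha, hb⟩ := h
  obtain ⟨x1, x2, x3, x4, x5, x6⟩ := hA
  have ne : ∀ {p q : Fin 5}, p ≠ q → σ p ≠ σ q := fun h e => h (σ.injective e)
  have tie : ∀ p q r : Fin 5, p ≠ q → p ≠ r → q ≠ r → θ (σ p) = θ (σ q) → θ (σ q) = θ (σ r) → False :=
    fun p q r h1 h2 h3 e1 e2 => hb _ _ _ (ne h1) (ne h2) (ne h3) ⟨0, by simp [e1]⟩ ⟨0, by simp [e1, e2]⟩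
  refine ⟨⟨x1, x2, x3, x4, x5, x6⟩, ?_, ?_, ?_, ?_, ?_, ?_⟩ <;> by_contra! hc
  · exact ha (σ 0) (σ 1) (ne (by decide)) ⟨0, by push_cast; linarith⟩ ⟨0, by push_cast; linarith⟩
  · exact ha (σ 3) (σ 4) (ne (by decide)) ⟨1, by push_cast; linarith⟩ ⟨1, by push_cast; linarith⟩
  · exact tie 0 1 2 (by decide) (by decide) (by decide) (by linarith) (by linarith)
  · exact tie 1 2 3 (by decide) (by decide) (by decide) (by linarith) (by linarith)
  · exact tie 2 3 4 (by decide) (by decide) (by decide) (by linarith) (by linarith)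
  · exact ha (σ 0) (σ 4) (ne (by decide)) ⟨0, by push_cast; linarith⟩ ⟨1, by push_cast; linarith⟩

theorem mem_Chamber_mul (σ τ : Perm (Fin 5)) (θ : Fin 5 → ℝ) :
    θ ∈ Chamber (σ * τ) ↔ θ ∘ σ ∈ Chamber τ := Iff.rfl

/-- The centre of the chamber `σ`, where the six points are equally spaced. -/
def centre (σ : Perm (Fin 5)) : Fin 5 → ℝ := fun l => ((σ⁻¹ l).val + 1) / 6

theorem centre_mem (σ : Perm (Fin 5)) : centre σ ∈ Chamber σ := by
  have : ∀ i, σ⁻¹ (σ i) = i := fun i => σ.symm_apply_apply i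
  simp only [Chamber, Alcove, Set.mem_ofPred_eq, centre, this]
  norm_num

/-! ### Cocycles on straight segments -/

/-- The pullback of a cocycle along a continuous map. -/
def PathCocycle.comap {X Y M : Type*} [TopologicalSpace X] [TopologicalSpace Y] [AddCommGroup M]
    (c : PathCocycle Y M) (f : C(X, Y)) : PathCocycle X M where
  toFun γ := c.toFun (f.comp γ)
  homotopic' h := c.homotopic' (h.comp_continuousMap f)
  trans' p q := by
    have := c.trans' (p.map f.continuous) (q.map f.continuous)
    rw [← Path.map_trans] at this
    exact this

/-- The pushforward of a cocycle along a homomorphism of coefficients. -/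
def PathCocycle.map {X M N : Type*} [TopologicalSpace X] [AddCommGroup M] [AddCommGroup N]
    (c : PathCocycle X M) (f : M →+ N) : PathCocycle X N where
  toFun γ := f (c.toFun γ)
  homotopic' h := congrArg f (c.homotopic' h)
  trans' p q := by rw [c.trans', map_add]

/-- `expMap` as a map from the admissible vectors onto the configuration space. -/
def expAdm : C(Adm, QSet 5) :=
  ⟨fun θ => ⟨expMap θ, θ.2⟩, (continuous_expMap.comp continuous_subtype_val).subtype_mk _⟩

theorem add_ofInt_mem_Adm {θ : Fin 5 → ℝ} (h : θ ∈ Adm) (n : Fin 5 → ℤ) : θ + ofInt n ∈ Adm := by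
  unfold Adm at *
  simpa [expMap_add_ofInt] using h

theorem convex_lineMap_mem {B : Set (Fin 5 → ℝ)} (hB : Convex ℝ B) {x y : Fin 5 → ℝ} (hx : x ∈ B)
    (hy : y ∈ B) (t : unitInterval) : AffineMap.lineMap x y (t : ℝ) ∈ B :=
  hB.segment_subset hx hy (by
    rw [segment_eq_image_lineMap]; exact ⟨t, t.2, rfl⟩)

section seg

variable {M : Type*} [AddCommGroup M] (c : PathCocycle (QSet 5) M)

/-- The value of a cocycle on the image of the straight segment from `x` to `y`
(`0` when the segment leaves the admissible set). -/
def seg (x y : Fin 5 → ℝ) : M :=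
  open Classical in
  if h : ∀ t : unitInterval, AffineMap.lineMap x y (t : ℝ) ∈ Adm then
    (c.comap expAdm).toFun ⟨fun t => ⟨AffineMap.lineMap x y (t : ℝ), h t⟩,
      ((AffineMap.lineMap_continuous).comp continuous_subtype_val).subtype_mk _⟩
  else 0

/-- In a convex set of admissible vectors a cocycle sees only the ends of a path. -/
theorem seg_of_path {B : Set (Fin 5 → ℝ)} (hB : Convex ℝ B) (hBA : B ⊆ Adm)
    (g : C(unitInterval, Adm)) (hg : ∀ t, (g t : Fin 5 → ℝ) ∈ B) :
    (c.comap expAdm).toFun g = seg c (g 0) (g 1) := by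
  have h : ∀ t : unitInterval, AffineMap.lineMap (g 0 : Fin 5 → ℝ) (g 1) (t : ℝ) ∈ Adm :=
    fun t => hBA (convex_lineMap_mem hB (hg 0) (hg 1) t)
  rw [seg, dif_pos h]
  apply (c.comap expAdm).homotopic'
  refine ⟨{ toFun := fun p => ⟨AffineMap.lineMap (g p.2 : Fin 5 → ℝ)
              (AffineMap.lineMap (g 0 : Fin 5 → ℝ) (g 1) (p.2 : ℝ)) (p.1 : ℝ),
              hBA (convex_lineMap_mem hB (hg _) (convex_lineMap_mem hB (hg 0) (hg 1) _) _)⟩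
            continuous_toFun := ?_
            map_zero_left := fun t => Subtype.ext (by simp)
            map_one_left := fun t => Subtype.ext (by simp)
            prop' := ?_ }⟩
  · refine Continuous.subtype_mk ?_ _
    simp only [AffineMap.lineMap_apply_module']
    fun_prop
  · rintro t x (rfl | rfl) <;> exact Subtype.ext (by simp)

theorem seg_trans {B : Set (Fin 5 → ℝ)} (hB : Convex ℝ B) (hBA : B ⊆ Adm) {x y z : Fin 5 → ℝ}
    (hx : x ∈ B) (hy : y ∈ B) (hz : z ∈ B) : seg c x z = seg c x y + seg c y z := by
  have mk : ∀ x y : Fin 5 → ℝ, x ∈ B → y ∈ B → ∀ (hx : x ∈ Adm) (hy : y ∈ Adm),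
      ∃ p : Path (⟨x, hx⟩ : Adm) ⟨y, hy⟩, ∀ t, (p t : Fin 5 → ℝ) ∈ B := by
    intro x y hx hy hx' hy'
    refine ⟨⟨⟨fun t => ⟨AffineMap.lineMap x y (t : ℝ), hBA (convex_lineMap_mem hB hx hy t)⟩,
      ((AffineMap.lineMap_continuous).comp continuous_subtype_val).subtype_mk _⟩,
      Subtype.ext (by simp), Subtype.ext (by simp)⟩, fun t => convex_lineMap_mem hB hx hy t⟩
  obtain ⟨p, hp⟩ := mk x y hx hy (hBA hx) (hBA hy)
  obtain ⟨q, hq⟩ := mk y z hy hz (hBA hy) (hBA hz)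
  have hpq : ∀ t, ((p.trans q) t : Fin 5 → ℝ) ∈ B := by
    intro t
    have : (p.trans q) t ∈ Set.range p ∪ Set.range q := Path.trans_range p q ▸ ⟨t, rfl⟩
    rcases this with ⟨s, hs⟩ | ⟨s, hs⟩
    · rw [← hs]; exact hp s
    · rw [← hs]; exact hq s
  have h := (c.comap expAdm).trans' p q
  rw [seg_of_path c hB hBA _ hpq, seg_of_path c hB hBA _ hp, seg_of_path c hB hBA _ hq] at h
  simpa using h

theorem seg_add_ofInt (x y : Fin 5 → ℝ) (n : Fin 5 → ℤ) :
    seg c (x + ofInt n) (y + ofInt n) = seg c x y := by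
  have e : ∀ t : ℝ, AffineMap.lineMap (x + ofInt n) (y + ofInt n) t =
      AffineMap.lineMap x y t + ofInt n := by
    intro t
    simp only [AffineMap.lineMap_apply_module']
    rw [add_sub_add_right_eq_sub]; abel
  have e' : ∀ t : ℝ, AffineMap.lineMap (x + ofInt n) (y + ofInt n) t ∈ Adm ↔
      AffineMap.lineMap x y t ∈ Adm := by
    intro t
    rw [e]; unfold Adm; simp only [Set.mem_ofPred_eq, expMap_add_ofInt]
  unfold seg
  by_cases h : ∀ t : unitInterval, AffineMap.lineMap x y (t : ℝ) ∈ Adm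
  · have h' : ∀ t : unitInterval, AffineMap.lineMap (x + ofInt n) (y + ofInt n) (t : ℝ) ∈ Adm :=
      fun t => (e' t).2 (h t)
    rw [dif_pos h, dif_pos h']
    refine congrArg c.toFun (ContinuousMap.ext fun t => Subtype.ext ?_)
    exact (congrArg expMap (e t)).trans (expMap_add_ofInt _ _)
  · have h' : ¬ ∀ t : unitInterval, AffineMap.lineMap (x + ofInt n) (y + ofInt n) (t : ℝ) ∈ Adm :=
      fun h' => h fun t => (e' t).1 (h' t)
    rw [dif_neg h, dif_neg h']

end seg

/-! ### Walls and jumps -/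

/-- The integer vector by which `θ` moves when it crosses the `g`-th wall of the alcove `σ`:
for `g = 4` the smallest entry is raised by one, otherwise nothing moves. -/
def shift (g : Fin 5) (σ : Perm (Fin 5)) : Fin 5 → ℤ := if g = 4 then Pi.single (σ 0) 1 else 0

/-- The `g`-th wall of the chamber `σ`, glued by `shift g σ` to the chamber `σ * gen g`. -/
def Wall (g : Fin 5) (σ : Perm (Fin 5)) : Set (Fin 5 → ℝ) :=
  {w | w ∈ Chamber σ ∧ w + ofInt (shift g σ) ∈ Chamber (σ * gen g)}

theorem shift_mul (g : Fin 5) (σ τ : Perm (Fin 5)) : shift g (σ * τ) ∘ σ = shift g τ := by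
  unfold shift
  split_ifs with h
  · funext i
    by_cases hi : i = τ 0
    · subst hi; simp
    · simp [hi]
  · rfl

theorem mem_Wall_mul (g : Fin 5) (σ τ : Perm (Fin 5)) (w : Fin 5 → ℝ) :
    w ∈ Wall g (σ * τ) ↔ w ∘ σ ∈ Wall g τ := by
  have : (w + ofInt (shift g (σ * τ))) ∘ σ = w ∘ σ + ofInt (shift g τ) := by
    rw [← shift_mul g σ τ]; rfl
  unfold Wall
  simp only [Set.mem_ofPred_eq, mul_assoc, mem_Chamber_mul, this]

/-- The chamber condition for the vector `v / 5`, in integers. -/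
def ChamberZ (σ : Perm (Fin 5)) (v : Fin 5 → ℤ) : Prop :=
  (0 ≤ v (σ 0) ∧ v (σ 0) ≤ v (σ 1) ∧ v (σ 1) ≤ v (σ 2) ∧ v (σ 2) ≤ v (σ 3) ∧
    v (σ 3) ≤ v (σ 4) ∧ v (σ 4) ≤ 5) ∧ 0 < v (σ 1) ∧ v (σ 3) < 5 ∧ v (σ 0) < v (σ 2) ∧
    v (σ 1) < v (σ 3) ∧ v (σ 2) < v (σ 4) ∧ v (σ 4) < v (σ 0) + 5

instance (σ : Perm (Fin 5)) (v : Fin 5 → ℤ) : Decidable (ChamberZ σ v) := by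
  unfold ChamberZ; infer_instance

theorem mem_Chamber_of_ChamberZ {σ : Perm (Fin 5)} {v : Fin 5 → ℤ} (h : ChamberZ σ v) :
    (fun i => (v i : ℝ) / 5) ∈ Chamber σ := by
  have e : ∀ x : ℝ, x / 5 + 1 = (x + 5) / 5 := fun x => by ring
  have e1 : ∀ x : ℝ, x / 5 ≤ 1 ↔ x ≤ 5 := fun x => div_le_one (by norm_num)
  have e2 : ∀ x : ℝ, x / 5 < 1 ↔ x < 5 := fun x => div_lt_one (by norm_num)
  have e3 : ∀ x : ℝ, 0 ≤ x / 5 ↔ 0 ≤ x := fun x => by constructor <;> intro <;> linarith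
  have e4 : ∀ x : ℝ, 0 < x / 5 ↔ 0 < x := fun x => by constructor <;> intro <;> linarith
  simp only [Chamber, Alcove, Set.mem_ofPred_eq, e, e1, e2, e3, e4,
    div_le_div_iff_of_pos_right (show (0 : ℝ) < 5 by norm_num),
    div_lt_div_iff_of_pos_right (show (0 : ℝ) < 5 by norm_num)]
  exact_mod_cast h

/-- The wall condition for the vector `v / 5`, in integers. -/
def WallZ (g : Fin 5) (σ : Perm (Fin 5)) (v : Fin 5 → ℤ) : Prop :=
  ChamberZ σ v ∧ ChamberZ (σ * gen g) (fun i => v i + 5 * shift g σ i)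

instance (g : Fin 5) (σ : Perm (Fin 5)) (v : Fin 5 → ℤ) : Decidable (WallZ g σ v) := by
  unfold WallZ; infer_instance

theorem mem_Wall_of_WallZ {g : Fin 5} {σ : Perm (Fin 5)} {v : Fin 5 → ℤ} (h : WallZ g σ v) :
    (fun i => (v i : ℝ) / 5) ∈ Wall g σ := by
  refine ⟨mem_Chamber_of_ChamberZ h.1, ?_⟩
  convert mem_Chamber_of_ChamberZ h.2 using 1
  funext i
  simp [ofInt]; ring

/-- By symmetry it is enough to find a point on each wall of the chamber of the identity. -/
theorem exists_mem_Wall (g : Fin 5) (σ : Perm (Fin 5)) : ∃ w, w ∈ Wall g σ := by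
  have h : ∀ g : Fin 5, WallZ g 1 ((![![1, 1, 2, 3, 4], ![1, 2, 2, 3, 4], ![1, 2, 3, 3, 4],
      ![1, 2, 3, 4, 4], ![0, 1, 2, 3, 4]] : Fin 5 → Fin 5 → ℤ) g) := by decide +kernel
  refine ⟨(fun i => ((![![1, 1, 2, 3, 4], ![1, 2, 2, 3, 4], ![1, 2, 3, 3, 4],
      ![1, 2, 3, 4, 4], ![0, 1, 2, 3, 4]] : Fin 5 → Fin 5 → ℤ) g i : ℝ) / 5) ∘ σ.symm, ?_⟩
  have := mem_Wall_mul g σ 1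
  rw [mul_one] at this
  rw [this]
  convert mem_Wall_of_WallZ (h g) using 1
  funext i
  simp

/-- Around a codimension-two stratum: a point lying on two walls, which stays on them in
either order of crossing. -/
theorem exists_square (q) (hq : q ∈ squares) (σ : Perm (Fin 5)) :
    shift q.1 σ + shift q.2.1 (σ * gen q.1) = shift q.2.2.1 σ + shift q.2.2.2 (σ * gen q.2.2.1) ∧
    ∃ w, (w ∈ Wall q.1 σ ∧ w + ofInt (shift q.1 σ) ∈ Wall q.2.1 (σ * gen q.1)) ∧
      (w ∈ Wall q.2.2.1 σ ∧ w + ofInt (shift q.2.2.1 σ) ∈ Wall q.2.2.2 (σ * gen q.2.2.1)) := by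
  have key : ∀ q ∈ squares,
      (∀ i, shift q.1 1 i + shift q.2.1 (gen q.1) i =
        shift q.2.2.1 1 i + shift q.2.2.2 (gen q.2.2.1) i) ∧
      ∃ v ∈ ([![1, 1, 2, 2, 3], ![1, 1, 2, 3, 3], ![1, 2, 2, 3, 3], ![0, 2, 2, 3, 4],
          ![0, 1, 2, 2, 3], ![0, 1, 2, 3, 3]] : List (Fin 5 → ℤ)),
        (WallZ q.1 1 v ∧ WallZ q.2.1 (gen q.1) fun i => v i + 5 * shift q.1 1 i) ∧
        (WallZ q.2.2.1 1 v ∧ WallZ q.2.2.2 (gen q.2.2.1) fun i => v i + 5 * shift q.2.2.1 1 i) := by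
    decide +kernel
  obtain ⟨h1, v, -, ⟨h2, h3⟩, h4, h5⟩ := key q hq
  have sh : ∀ g τ i, shift g (σ * τ) (σ i) = shift g τ i := fun g τ i =>
    congrFun (shift_mul g σ τ) i
  have sh1 : ∀ g i, shift g σ (σ i) = shift g 1 i := fun g i => by simpa using sh g 1 i
  refine ⟨?_, (fun i => (v i : ℝ) / 5) ∘ σ.symm, ?_⟩
  · funext l
    obtain ⟨i, rfl⟩ := σ.surjective l
    simpa only [Pi.add_apply, sh, sh1] using h1 i
  · have hw : ∀ g, WallZ g 1 v → (fun i => (v i : ℝ) / 5) ∘ σ.symm ∈ Wall g σ := by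
      intro g h
      have := (mem_Wall_mul g σ 1 ((fun i => (v i : ℝ) / 5) ∘ σ.symm)).2 (by
        convert mem_Wall_of_WallZ h using 1
        funext i; simp)
      simpa using this
    have hw' : ∀ g g', (WallZ g' (gen g) fun i => v i + 5 * shift g 1 i) →
        (fun i => (v i : ℝ) / 5) ∘ σ.symm + ofInt (shift g σ) ∈ Wall g' (σ * gen g) := by
      intro g g' h
      rw [mem_Wall_mul]
      convert mem_Wall_of_WallZ h using 1
      funext i
      simp [ofInt, sh1]; ring
    exact ⟨⟨hw _ h2, hw' _ _ h3⟩, hw _ h4, hw' _ _ h5⟩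

section jump

variable {M : Type*} [AddCommGroup M] (c : PathCocycle (QSet 5) M)

/-- The value of a cocycle on the path from the centre of `σ` to that of `σ * gen g` which
crosses the wall at `w`. -/
def wallJump (g : Fin 5) (σ : Perm (Fin 5)) (w : Fin 5 → ℝ) : M :=
  seg c (centre σ) w - seg c (centre (σ * gen g)) (w + ofInt (shift g σ))

theorem seg_trans_Chamber {σ : Perm (Fin 5)} {x y z : Fin 5 → ℝ} (hx : x ∈ Chamber σ)
    (hy : y ∈ Chamber σ) (hz : z ∈ Chamber σ) : seg c x z = seg c x y + seg c y z :=
  seg_trans c (convex_Chamber σ) (Chamber_subset_Adm σ) hx hy hz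

/-- The jump does not depend on the crossing point: the two sides change by the values of the cocycle
on a segment and on its translate by an integer vector, which agree. -/
theorem wallJump_eq {g : Fin 5} {σ : Perm (Fin 5)} {w w' : Fin 5 → ℝ} (h : w ∈ Wall g σ)
    (h' : w' ∈ Wall g σ) : wallJump c g σ w' = wallJump c g σ w := by
  unfold wallJump
  rw [seg_trans_Chamber c (centre_mem _) h.1 h'.1, seg_trans_Chamber c (centre_mem _) h.2 h'.2,
    seg_add_ofInt]
  abel

/-- After subtracting a coboundary, the jumps lie in a subgroup with fifteen generators. -/
theorem exists_wallJump_generators :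
    ∃ (a : Perm (Fin 5) → M) (S : Fin 15 → M), ∀ g σ, ∀ w ∈ Wall g σ,
      wallJump c g σ w - (a (σ * gen g) - a σ) ∈ AddSubgroup.closure (Set.range S) := by
  suffices H : ∃ (a : Perm (Fin 5) → M) (S : Fin 15 → M), ∀ g σ,
      wallJump c g σ (exists_mem_Wall g σ).choose - (a (σ * gen g) - a σ) ∈
        AddSubgroup.closure (Set.range S) by
    obtain ⟨a, S, h⟩ := H
    refine ⟨a, S, fun g σ w hw => ?_⟩
    rw [wallJump_eq c (exists_mem_Wall g σ).choose_spec hw]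
    exact h g σ
  refine exists_generators (fun g σ => wallJump c g σ (exists_mem_Wall g σ).choose) ?_ ?_
  · intro g hg σ
    obtain ⟨w, hw⟩ := exists_mem_Wall g σ
    have hg4 : g ≠ 4 := by rintro rfl; revert hg; decide
    have hs : ∀ σ, w + ofInt (shift g σ) = w := by
      intro σ; funext i; simp [ofInt, shift, hg4]
    have hσ : σ * gen g * gen g = σ := by rw [mul_assoc, gen_swap_mul_self g hg, mul_one]
    have hw' : w ∈ Wall g (σ * gen g) := by
      refine ⟨by simpa only [hs] using hw.2, ?_⟩
      rw [hs, hσ]; exact hw.1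
    rw [← wallJump_eq c (exists_mem_Wall g σ).choose_spec hw,
      ← wallJump_eq c (exists_mem_Wall g (σ * gen g)).choose_spec hw']
    unfold wallJump
    rw [hs, hs, hσ]; abel
  · intro q hq σ
    obtain ⟨hn, w, ⟨h1, h2⟩, h3, h4⟩ := exists_square q hq σ
    rw [← wallJump_eq c (exists_mem_Wall _ _).choose_spec h1,
      ← wallJump_eq c (exists_mem_Wall _ _).choose_spec h2,
      ← wallJump_eq c (exists_mem_Wall _ _).choose_spec h3,
      ← wallJump_eq c (exists_mem_Wall _ _).choose_spec h4]
    unfold wallJump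
    rw [add_assoc, add_assoc, ← ofInt_add, ← ofInt_add, hn, mul_assoc, mul_assoc,
      gen_squares q hq]
    abel

end jump

/-! ### A global primitive -/

section potential

variable {M : Type*} [AddCommGroup M] (c : PathCocycle (QSet 5) M) (a : Perm (Fin 5) → M)

/-- The primitive of `c` on the chamber `σ`, with value `a σ` at the centre. -/
def localPot (σ : Perm (Fin 5)) (θ : Fin 5 → ℝ) : M := seg c (centre σ) θ + a σ

/-- The fractional parts of a vector. -/
def fractVec (θ : Fin 5 → ℝ) : Fin 5 → ℝ := fun i => Int.fract (θ i)

/-- The global primitive of `c`: reduce modulo the integers and use the primitive on the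
chamber of the sorting permutation. -/
def pot (θ : Fin 5 → ℝ) : M := localPot c a (Tuple.sort (fractVec θ)) (fractVec θ)

theorem fractVec_sub_ofInt (θ : Fin 5 → ℝ) (n : Fin 5 → ℤ) :
    fractVec (θ - ofInt n) = fractVec θ := by
  funext i
  exact Int.fract_sub_intCast (θ i) (n i)

theorem mem_Chamber_of_comp_eq {σ τ : Perm (Fin 5)} {θ : Fin 5 → ℝ} (h : θ ∈ Chamber σ)
    (e : ∀ i, θ (τ i) = θ (σ i)) : θ ∈ Chamber τ := by
  unfold Chamber Alcove at *
  simpa only [Set.mem_ofPred_eq, e] using h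

/-- `Tuple.sort` breaks ties by the index, so if `σ` sorts `θ` differently then some tied
neighbours are in wrong order. -/
theorem exists_swap_of_ne_sort {σ : Perm (Fin 5)} {θ : Fin 5 → ℝ} (h : θ ∈ Chamber σ)
    (hs : σ ≠ Tuple.sort θ) : ∃ g : Fin 5, ∃ j : Fin 5, g ∈ ([0, 1, 2, 3] : List (Fin 5)) ∧
      j.val = g.val + 1 ∧ θ (σ g) = θ (σ j) ∧ σ j < σ g := by
  have hm : Monotone (θ ∘ σ) := by
    obtain ⟨⟨x1, x2, x3, x4, x5, x6⟩, -⟩ := h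
    rw [Fin.monotone_iff_le_succ]
    intro i
    fin_cases i
    exacts [x2, x3, x4, x5]
  by_contra! hc
  refine hs (Tuple.eq_sort_iff.2 ⟨hm, fun i j hij e => ?_⟩)
  have hij' : i.val < j.val := hij
  have hj : j.val = i.val + 1 := by
    by_contra hne
    exact (Chamber_gap h (show i.val + 2 ≤ j.val by omega)).1.ne e
  have hi : i ∈ ([0, 1, 2, 3] : List (Fin 5)) := by
    have := j.isLt
    have h4 : i.val < 4 := by omega
    clear * - h4
    revert i; decide
  exact lt_of_le_of_ne (hc i j hi hj e) fun heq => hij.ne (σ.injective heq)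

/-- A measure of the disorder of `σ`, lowered by the exchange of two neighbours in wrong order. -/
def disorder (σ : Perm (Fin 5)) : ℕ := 4 * (σ 0).val + 3 * (σ 1).val + 2 * (σ 2).val + (σ 3).val

theorem disorder_mul_gen (σ : Perm (Fin 5)) (g : Fin 5) (hg : g ∈ ([0, 1, 2, 3] : List (Fin 5)))
    (j : Fin 5) (hj : j.val = g.val + 1) (h : σ j < σ g) : disorder (σ * gen g) < disorder σ := by
  have h : (σ j).val < (σ g).val := h
  simp only [disorder, Perm.mul_apply]
  have d : gen 0 0 = 1 ∧ gen 0 1 = 0 ∧ gen 0 2 = 2 ∧ gen 0 3 = 3 ∧ gen 1 0 = 0 ∧ gen 1 1 = 2 ∧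
    gen 1 2 = 1 ∧ gen 1 3 = 3 ∧ gen 2 0 = 0 ∧ gen 2 1 = 1 ∧ gen 2 2 = 3 ∧ gen 2 3 = 2 ∧
    gen 3 0 = 0 ∧ gen 3 1 = 1 ∧ gen 3 2 = 2 ∧ gen 3 3 = 4 := by decide
  obtain ⟨d1, d2, d3, d4, d5, d6, d7, d8, d9, d10, d11, d12, d13, d14, d15, d16⟩ := d
  simp only [List.mem_cons, List.not_mem_nil, or_false] at hg
  rcases hg with rfl | rfl | rfl | rfl
  · obtain rfl : j = 1 := Fin.ext hj
    rw [d1, d2, d3, d4]; omega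
  · obtain rfl : j = 2 := Fin.ext hj
    rw [d5, d6, d7, d8]; omega
  · obtain rfl : j = 3 := Fin.ext hj
    rw [d9, d10, d11, d12]; omega
  · obtain rfl : j = 4 := Fin.ext hj
    rw [d13, d14, d15, d16]; omega

theorem comp_gen_of_tie (σ : Perm (Fin 5)) (θ : Fin 5 → ℝ) (g : Fin 5)
    (hg : g ∈ ([0, 1, 2, 3] : List (Fin 5))) (j : Fin 5) (hj : j.val = g.val + 1)
    (e : θ (σ g) = θ (σ j)) (i : Fin 5) : θ ((σ * gen g) i) = θ (σ i) := by
  have hgen : gen g i = if i = g then j else if i = j then g else i := by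
    clear e
    revert g j i; decide
  rw [Perm.mul_apply, hgen]
  split_ifs with h1 h2
  · rw [h1, e]
  · rw [h2, e]
  · rfl

section

variable (ha : ∀ g σ, ∀ w ∈ Wall g σ, wallJump c g σ w = a (σ * gen g) - a σ)
include ha

/-- The primitives of adjacent chambers match along the wall. -/
theorem localPot_wall {g : Fin 5} {σ : Perm (Fin 5)} {w : Fin 5 → ℝ} (hw : w ∈ Wall g σ) :
    localPot c a (σ * gen g) (w + ofInt (shift g σ)) = localPot c a σ w := by
  have := ha g σ w hw
  unfold wallJump at this
  unfold localPot
  rw [sub_eq_iff_eq_add] at this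
  rw [this]; abel

/-- At a point of several chambers the local primitives agree: pass from one to another by walls
through that point. -/
theorem localPot_sort {σ : Perm (Fin 5)} {θ : Fin 5 → ℝ} (h : θ ∈ Chamber σ) :
    localPot c a σ θ = localPot c a (Tuple.sort θ) θ := by
  induction hN : disorder σ using Nat.strong_induction_on generalizing σ with
  | _ N ih =>
    by_cases hs : σ = Tuple.sort θ
    · rw [← hs]
    obtain ⟨g, j, hg, hj, e, hlt⟩ := exists_swap_of_ne_sort h hs
    have h' := mem_Chamber_of_comp_eq h (comp_gen_of_tie σ θ g hg j hj e)
    have hn : θ + ofInt (shift g σ) = θ := by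
      have hg4 : g ≠ 4 := by rintro rfl; revert hg; decide
      funext i; simp [ofInt, shift, hg4]
    have hw : θ ∈ Wall g σ := ⟨h, by rw [hn]; exact h'⟩
    have := localPot_wall c a ha hw
    rw [hn] at this
    rw [← this]
    exact ih _ (hN ▸ disorder_mul_gen σ g hg j hj hlt) h' rfl

theorem pot_eq_of_lt {σ : Perm (Fin 5)} {θ : Fin 5 → ℝ} {n : Fin 5 → ℤ}
    (h : θ - ofInt n ∈ Chamber σ) (h1 : (θ - ofInt n) (σ 4) < 1) :
    localPot c a σ (θ - ofInt n) = pot c a θ := by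
  have hf : fractVec θ = θ - ofInt n := by
    rw [← fractVec_sub_ofInt θ n]
    funext l
    obtain ⟨i, rfl⟩ := σ.surjective l
    obtain ⟨⟨x1, x2, x3, x4, x5, x6⟩, -⟩ := h
    refine Int.fract_eq_self.2 ?_
    fin_cases i <;> constructor <;> simp only [Fin.zero_eta, Fin.mk_one, Fin.reduceFinMk] <;> linarith
  rw [pot, hf]
  exact localPot_sort c a ha h

/-- The value of `pot` can be computed in any chamber containing an integer translate of `θ`. When the
largest coordinate is `1` there, the translate used by `pot` lies across the last wall. -/
theorem pot_eq {σ : Perm (Fin 5)} {θ : Fin 5 → ℝ} {n : Fin 5 → ℤ}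
    (h : θ - ofInt n ∈ Chamber σ) : localPot c a σ (θ - ofInt n) = pot c a θ := by
  rcases lt_or_eq_of_le h.1.2.2.2.2.2 with h1 | h1
  · exact pot_eq_of_lt c a ha h h1
  · obtain ⟨τ, rfl⟩ : ∃ τ, σ = τ * gen 4 := ⟨σ * (gen 4)⁻¹, by simp⟩
    have hs : shift 4 τ = Pi.single (τ 0) 1 := by simp [shift]
    have hθ : θ - ofInt n = θ - ofInt (n + shift 4 τ) + ofInt (shift 4 τ) := by
      rw [ofInt_add]; abel
    have d : ∀ i, (τ * gen 4) i = τ (i + 1) := fun i => congrArg τ (by revert i; decide)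
    have e0 : (θ - ofInt (n + shift 4 τ)) (τ 0) = (θ - ofInt n) (τ 0) - 1 := by
      simp [ofInt, hs]; ring
    have e : ∀ i, i ≠ 0 → (θ - ofInt (n + shift 4 τ)) (τ i) = (θ - ofInt n) (τ i) := by
      intro i hi
      simp [ofInt, hs, hi]
    have d1 : (0 + 1 : Fin 5) = 1 ∧ (1 + 1 : Fin 5) = 2 ∧ (2 + 1 : Fin 5) = 3 ∧
      (3 + 1 : Fin 5) = 4 ∧ (4 + 1 : Fin 5) = 0 := by decide
    obtain ⟨d1, d2, d3, d4, d5⟩ := d1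
    have e1 := e 1 (by decide)
    have e2 := e 2 (by decide)
    have e3 := e 3 (by decide)
    have e4 := e 4 (by decide)
    have h' := h
    obtain ⟨⟨x1, x2, x3, x4, x5, x6⟩, y1, y2, y3, y4, y5, y6⟩ := h'
    simp only [d, d1, d2, d3, d4, d5] at x1 x2 x3 x4 x5 x6 y1 y2 y3 y4 y5 y6 h1
    have hτ : θ - ofInt (n + shift 4 τ) ∈ Chamber τ := by
      refine ⟨⟨?_, ?_, ?_, ?_, ?_, ?_⟩, ?_, ?_, ?_, ?_, ?_, ?_⟩ <;>
        simp only [e0, e1, e2, e3, e4] <;> linarith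
    have hw : θ - ofInt (n + shift 4 τ) ∈ Wall 4 τ := ⟨hτ, by rw [← hθ]; exact h⟩
    have := localPot_wall c a ha hw
    rw [← hθ] at this
    rw [this]
    exact pot_eq_of_lt c a ha hτ (by rw [e4]; linarith)

/-- Near an admissible vector, `pot` is a primitive of `c`. -/
theorem eventually_pot_sub {θ₀ : Fin 5 → ℝ} (h₀ : θ₀ ∈ Adm) :
    ∀ᶠ θ in 𝓝 θ₀, pot c a θ - pot c a θ₀ = seg c θ₀ θ := by
  obtain ⟨r, hr, hball⟩ := Metric.isOpen_iff.1 isOpen_Adm θ₀ h₀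
  have hcl : ∀ (σ : Perm (Fin 5)) (n : Fin 5 → ℤ), ∀ᶠ θ in 𝓝 θ₀,
      θ - ofInt n ∈ Alcove σ → θ₀ - ofInt n ∈ Alcove σ := by
    intro σ n
    by_cases h : θ₀ - ofInt n ∈ Alcove σ
    · exact Filter.Eventually.of_forall fun _ _ => h
    · have hc : Continuous fun θ : Fin 5 → ℝ => θ - ofInt n := by fun_prop
      filter_upwards [((isClosed_Alcove σ).preimage hc).isOpen_compl.mem_nhds h] with θ hθ h'
      exact absurd h' hθ
  have hfin : (Set.pi Set.univ fun i : Fin 5 => Set.Icc (⌊θ₀ i⌋ - 1) (⌊θ₀ i⌋ + 1)).Finite :=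
    Set.Finite.pi fun i => Set.finite_Icc _ _
  have hall : ∀ᶠ θ in 𝓝 θ₀, ∀ σ : Perm (Fin 5),
      ∀ n ∈ Set.pi Set.univ fun i : Fin 5 => Set.Icc (⌊θ₀ i⌋ - 1) (⌊θ₀ i⌋ + 1),
      θ - ofInt n ∈ Alcove σ → θ₀ - ofInt n ∈ Alcove σ :=
    Filter.eventually_all.2 fun σ => (Filter.eventually_all_finite hfin).2 fun n _ => hcl σ n
  -- `θ` lies near `θ₀`, so the chamber of `θ` modulo integers also contains `θ₀` modulo the same
  -- integers, and `pot` is the primitive on that chamber at both.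
  filter_upwards [hall, Metric.ball_mem_nhds θ₀ hr, Metric.ball_mem_nhds θ₀ one_pos]
    with θ hθ hθr hθ1
  set n : Fin 5 → ℤ := fun i => ⌊θ i⌋ with hn
  set σ := Tuple.sort (fractVec θ) with hσ
  have hfr : fractVec θ = θ - ofInt n := rfl
  have hA : θ - ofInt n ∈ Alcove σ := by
    rw [← hfr]
    have hm : Monotone (fractVec θ ∘ σ) := Tuple.monotone_sort _
    exact ⟨Int.fract_nonneg _, hm (by decide), hm (by decide), hm (by decide), hm (by decide),
      (Int.fract_lt_one _).le⟩
  have hnm : n ∈ Set.pi Set.univ fun i : Fin 5 => Set.Icc (⌊θ₀ i⌋ - 1) (⌊θ₀ i⌋ + 1) := by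
    intro i _
    have h1 : |θ i - θ₀ i| < 1 := by
      have := (dist_le_pi_dist θ θ₀ i).trans_lt hθ1
      rwa [Real.dist_eq] at this
    rw [abs_lt] at h1
    simp only [hn, Set.mem_Icc]
    constructor
    · rw [← Int.floor_sub_one]; exact Int.floor_mono (by linarith)
    · rw [← Int.floor_add_one]; exact Int.floor_mono (by linarith)
  have hA₀ := hθ σ n hnm hA
  have adm : ∀ {θ}, θ ∈ Adm → θ - ofInt n ∈ Adm := by
    intro θ h
    have := add_ofInt_mem_Adm h (-n)
    have e : ofInt (-n) = -ofInt n := by funext i; simp [ofInt]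
    rwa [e, ← sub_eq_add_neg] at this
  have hC := mem_Chamber_of_Adm (adm (hball hθr)) hA
  have hC₀ := mem_Chamber_of_Adm (adm h₀) hA₀
  rw [← pot_eq c a ha hC, ← pot_eq c a ha hC₀]
  unfold localPot
  rw [seg_trans_Chamber c (centre_mem σ) hC₀ hC]
  have := seg_add_ofInt c (θ₀ - ofInt n) (θ - ofInt n) n
  rw [sub_add_cancel, sub_add_cancel] at this
  rw [this]; abel

/-- A cocycle whose jumps across walls come from `a` is the difference of `pot` at the ends
of any path of admissible vectors. -/
theorem comap_eq_pot_sub (g : C(unitInterval, Adm)) :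
    (c.comap expAdm).toFun g = pot c a (g 1) - pot c a (g 0) := by
  refine (c.comap expAdm).eq_sub_of_local g (fun t => pot c a (g t)) fun t₀ => ?_
  obtain ⟨r, hr, hball⟩ := Metric.isOpen_iff.1 isOpen_Adm _ (g t₀).2
  have hg : Continuous fun t => (g t : Fin 5 → ℝ) := continuous_subtype_val.comp g.continuous
  have h1 : ∀ᶠ t in 𝓝 t₀, (g t : Fin 5 → ℝ) ∈ Metric.ball (g t₀ : Fin 5 → ℝ) r :=
    hg.continuousAt.eventually (Metric.ball_mem_nhds _ hr)
  have h2 : ∀ᶠ t in 𝓝 t₀, Set.uIcc t₀ t ⊆ {t | (g t : Fin 5 → ℝ) ∈ Metric.ball (g t₀ : Fin 5 → ℝ) r} :=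
    Filter.tendsto_smallSets_iff.1
      ((tendsto_const_nhds (x := t₀)).uIcc (Filter.tendsto_id (x := 𝓝 t₀))) _ h1
  filter_upwards [h2, hg.continuousAt.eventually (eventually_pot_sub c a ha (g t₀).2)] with t ht hp
  rw [hp]
  refine (seg_of_path c (convex_ball _ _) hball _ fun s => ?_).trans ?_
  · have : (asPath g).subpath t₀ t s ∈ asPath g '' Set.uIcc t₀ t :=
      Path.range_subpath (asPath g) t₀ t ▸ ⟨s, rfl⟩
    obtain ⟨u, hu, e⟩ := this
    have := ht hu
    change (((asPath g).subpath t₀ t s : Adm) : Fin 5 → ℝ) ∈ _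
    rw [← e]; exact this
  · congr 2
    · exact ((asPath g).subpath t₀ t).source
    · exact ((asPath g).subpath t₀ t).target

end

end potential

/-! ### Path connectedness and generators -/

theorem fractVec_mem_Alcove (θ : Fin 5 → ℝ) : fractVec θ ∈ Alcove (Tuple.sort (fractVec θ)) := by
  have hm : Monotone (fractVec θ ∘ Tuple.sort (fractVec θ)) := Tuple.monotone_sort _
  exact ⟨Int.fract_nonneg _, hm (by decide), hm (by decide), hm (by decide), hm (by decide),
    (Int.fract_lt_one _).le⟩

theorem expMap_fractVec (θ : Fin 5 → ℝ) : expMap (fractVec θ) = expMap θ := by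
  have h : fractVec θ + ofInt (fun i => ⌊θ i⌋) = θ := funext fun i => Int.fract_add_floor (θ i)
  rw [← expMap_add_ofInt, h]

/-- Chambers are convex, so their images are path connected. -/
theorem joined_of_Chamber {σ : Perm (Fin 5)} {x y : Fin 5 → ℝ} (hx : x ∈ Chamber σ)
    (hy : y ∈ Chamber σ) : Joined (expAdm ⟨x, Chamber_subset_Adm σ hx⟩)
      (expAdm ⟨y, Chamber_subset_Adm σ hy⟩) := by
  have hp : IsPathConnected (Chamber σ) := (convex_Chamber σ).isPathConnected ⟨x, hx⟩
  obtain ⟨p, hp⟩ := hp.joinedIn x hx y hy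
  exact ⟨{ toFun := fun t => expAdm ⟨p t, Chamber_subset_Adm σ (hp t)⟩
           continuous_toFun := expAdm.continuous.comp (p.continuous.subtype_mk _)
           source' := by simp
           target' := by simp }⟩

theorem expAdm_congr {x y : Fin 5 → ℝ} (hx : x ∈ Adm) (hy : y ∈ Adm) (h : expMap x = expMap y) :
    expAdm ⟨x, hx⟩ = expAdm ⟨y, hy⟩ := Subtype.ext h

/-- The image of the centre of `σ` in the configuration space. -/
def centrePt (σ : Perm (Fin 5)) : QSet 5 := expAdm ⟨centre σ, Chamber_subset_Adm σ (centre_mem σ)⟩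

theorem joined_centrePt (σ : Perm (Fin 5)) : Joined (centrePt 1) (centrePt σ) := by
  obtain ⟨w, -, rfl⟩ := words_complete σ
  induction w with
  | nil => exact Joined.refl _
  | cons g w ih =>
    refine ih.trans ?_
    obtain ⟨u, hu1, hu2⟩ := exists_mem_Wall g (wordPerm w)
    have h1 := joined_of_Chamber (centre_mem _) hu1
    have h2 := joined_of_Chamber hu2 (centre_mem _)
    rw [expAdm_congr _ (Chamber_subset_Adm _ hu1) (expMap_add_ofInt _ _)] at h2
    exact h1.trans h2

theorem pathConnectedSpace_QSet : PathConnectedSpace (QSet 5) := by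
  have key : ∀ z : QSet 5, Joined (centrePt 1) z := by
    intro z
    obtain ⟨θ, hθ⟩ : ∃ θ : Fin 5 → ℝ, expMap θ = z := by
      refine ⟨fun l => Complex.arg (z.1 l.castSucc) / (2 * π), funext fun j => ?_⟩
      induction j using Fin.lastCases with
      | last => rw [expMap_last, z.2.1]
      | cast l =>
        rw [expMap_castSucc, mul_div_cancel₀ _ (by positivity), Circle.exp_arg]
    have hA : fractVec θ ∈ Adm := by
      change expMap _ ∈ QSet 5
      rw [expMap_fractVec, hθ]; exact z.2
    have hC := mem_Chamber_of_Adm hA (fractVec_mem_Alcove θ)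
    have hz : expAdm ⟨fractVec θ, Chamber_subset_Adm _ hC⟩ = z :=
      Subtype.ext ((expMap_fractVec θ).trans hθ)
    rw [← hz]
    exact (joined_centrePt _).trans (joined_of_Chamber (centre_mem _) hC)
  exact ⟨⟨centrePt 1⟩, fun x y => (key x).symm.trans (key y)⟩

/-- Paths of configurations lift to paths of admissible vectors. -/
theorem exists_lift (γ : C(unitInterval, QSet 5)) :
    ∃ g : C(unitInterval, Adm), expAdm.comp g = γ := by
  have h : ∀ l : Fin 5, ∃ Γ : C(unitInterval, ℝ), ∀ t, Circle.exp (Γ t) = (γ t).1 l.castSucc := by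
    intro l
    let γl : C(unitInterval, Circle) := ⟨fun t => (γ t).1 l.castSucc,
      (continuous_apply _).comp (continuous_subtype_val.comp γ.continuous)⟩
    obtain ⟨Γ, hΓ, -⟩ := Circle.isCoveringMap_exp.exists_path_lifts γl (Complex.arg (γl 0))
      (Circle.exp_arg _).symm
    exact ⟨Γ, fun t => congrFun hΓ t⟩
  choose Γ hΓ using h
  have e : ∀ t, expMap (fun l => Γ l t / (2 * π)) = γ t := by
    intro t
    funext j
    induction j using Fin.lastCases with
    | last => rw [expMap_last, (γ t).2.1]
    | cast l => rw [expMap_castSucc, mul_div_cancel₀ _ (by positivity), hΓ]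
  have hA : ∀ t, (fun l => Γ l t / (2 * π)) ∈ Adm := by
    intro t
    change expMap _ ∈ QSet 5
    rw [e]; exact (γ t).2
  exact ⟨⟨fun t => ⟨fun l => Γ l t / (2 * π), hA t⟩, Continuous.subtype_mk (by fun_prop) _⟩,
    ContinuousMap.ext fun t => Subtype.ext (e t)⟩

theorem seg_map {M N : Type*} [AddCommGroup M] [AddCommGroup N] (c : PathCocycle (QSet 5) M)
    (f : M →+ N) (x y : Fin 5 → ℝ) : seg (c.map f) x y = f (seg c x y) := by
  unfold seg
  split_ifs with h
  · rfl
  · exact (map_zero f).symm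

theorem fractVec_eq_of_expMap_eq {x y : Fin 5 → ℝ} (h : expMap x = expMap y) :
    fractVec x = fractVec y := by
  funext l
  have := congrFun h l.castSucc
  rw [expMap_castSucc, expMap_castSucc, exp_eq_exp_iff] at this
  obtain ⟨m, hm⟩ := this
  unfold fractVec
  rw [hm, Int.fract_add_intCast]

/-- Modulo the subgroup generated by the fifteen jumps of the universal cocycle, that cocycle has the
primitive `pot`, which is invariant under integer translations. Hence every loop is trivial there. -/
theorem exists_fifteen_generators [PathConnectedSpace (QSet 5)] :
    ∃ S : Fin 15 → Additive (Abelianization (FundamentalGroup (QSet 5) (Qbase 5))),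
      AddSubgroup.closure (Set.range S) = ⊤ := by
  obtain ⟨a, S, h⟩ := exists_wallJump_generators (PathCocycle.univ (Qbase 5))
  refine ⟨S, eq_top_iff.2 fun z _ => ?_⟩
  set H := AddSubgroup.closure (Set.range S) with hH
  let c := (PathCocycle.univ (Qbase 5)).map (QuotientAddGroup.mk' H)
  have ha : ∀ g σ, ∀ w ∈ Wall g σ, wallJump c g σ w =
      (fun σ => QuotientAddGroup.mk' H (a σ)) (σ * gen g) -
        (fun σ => QuotientAddGroup.mk' H (a σ)) σ := by
    intro g σ w hw
    unfold wallJump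
    simp only [c, seg_map, ← map_sub]
    exact ((QuotientAddGroup.eq_iff_sub_mem).2 (h g σ w hw))
  obtain ⟨p, rfl⟩ := loopClass_surjective z
  obtain ⟨g, hg⟩ := exists_lift p.toContinuousMap
  have h1 := comap_eq_pot_sub c _ ha g
  have e : ∀ t, expMap (g t) = p t := fun t => congrArg Subtype.val (DFunLike.congr_fun hg t)
  have h2 : expMap (g 1) = expMap (g 0) := by rw [e, e, p.source, p.target]
  unfold pot at h1
  rw [fractVec_eq_of_expMap_eq h2, sub_self] at h1
  rw [← QuotientAddGroup.eq_zero_iff, ← PathCocycle.univ_loop, ← hg]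
  exact h1

end

/-! ### Free abelian groups from generators and a spanning image -/

/-- An abelian group with fifteen generators and a homomorphism to `ℂ¹⁵` with spanning image is free
on these generators: their images span `ℂ¹⁵`, so they are linearly independent. -/
theorem equiv_of_generators {A ι : Type*} [AddCommGroup A] [Fintype ι] [DecidableEq ι]
    (hι : Fintype.card ι = 15)
    (Φ : A →+ (ι → ℂ)) (hΦ : Submodule.span ℂ (Set.range Φ) = ⊤) (S : Fin 15 → A)
    (hS : AddSubgroup.closure (Set.range S) = ⊤) : Nonempty (A ≃+ (Fin 15 → ℤ)) := by
  have hspan : ⊤ ≤ Submodule.span ℂ (Set.range (Φ ∘ S)) := by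
    rw [← hΦ, Submodule.span_le]
    rintro _ ⟨a, rfl⟩
    have ha : a ∈ AddSubgroup.closure (Set.range S) := hS ▸ AddSubgroup.mem_top a
    induction ha using AddSubgroup.closure_induction with
    | mem x hx => obtain ⟨j, rfl⟩ := hx; exact Submodule.subset_span ⟨j, rfl⟩
    | zero => rw [map_zero]; exact zero_mem _
    | add x y _ _ hx hy => rw [map_add]; exact add_mem hx hy
    | neg x _ hx => rw [map_neg]; exact neg_mem hx
  have hli : LinearIndependent ℂ (Φ ∘ S) :=
    linearIndependent_of_top_le_span_of_card_eq_finrank hspan (by simp [hι])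
  let ψ : (Fin 15 → ℤ) →+ A :=
    { toFun := fun x => ∑ j, x j • S j
      map_zero' := by simp
      map_add' := fun x y => by simp [add_smul, Finset.sum_add_distrib] }
  refine ⟨(AddEquiv.ofBijective ψ ⟨?_, ?_⟩).symm⟩
  · rw [injective_iff_map_eq_zero]
    intro x hx
    have h : ∑ j, (x j : ℂ) • (Φ ∘ S) j = 0 := by
      have := congrArg Φ hx
      simp only [ψ, AddMonoidHom.coe_mk, ZeroHom.coe_mk, map_sum, map_zsmul, map_zero] at this
      rw [← this]
      exact Finset.sum_congr rfl fun j _ => by rw [Int.cast_smul_eq_zsmul, Function.comp_apply]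
    funext j
    exact_mod_cast Fintype.linearIndependent_iff.1 hli _ h j
  · rw [← AddMonoidHom.range_eq_top, eq_top_iff, ← hS, AddSubgroup.closure_le]
    rintro _ ⟨j, rfl⟩
    exact ⟨Pi.single j 1, by simp [ψ, Pi.single_apply]⟩

/-- The abelianization of the pure round twin group `Π₆ = π₁(Q₆, q₀)` is a
free abelian group of rank 15, i.e. it is isomorphic to `ℤ¹⁵`. (Here `Q₆ = QSet 5`.) -/
theorem abelianization_pure_round_twin_six :
    Nonempty (Abelianization (FundamentalGroup (QSet 5) (Qbase 5)) ≃*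
      Multiplicative (Fin 15 → ℤ)) := by
  have := pathConnectedSpace_QSet
  obtain ⟨S, hS⟩ := exists_fifteen_generators
  obtain ⟨e⟩ := equiv_of_generators (ι := Fin 5 ⊕ Triple) (by decide +kernel) windingHom
    span_windingHom S hS
  exact ⟨AddEquiv.toMultiplicativeRight e⟩
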